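/- Let ρ : Fin r → Equiv.Perm (Fin n) be a string C-group in the blocks-of-size-2 setup with m = n/2 ≥ 7 and r ≥ n/2. If the set R ∪ C has exactly 2 elements, then: the subgroup G_L generated by {ρ l : l ∈ L} is isomorphic as a group to Equiv.Perm (Fin m); R and C each have exactly one element; m is odd; and G equals the full subgroup {σ ∈ Equiv.Perm (Fin n) : ∀ x y, b x = b y → b (σ x) = b (σ y)} of all permutations preserving the fiber partition of b (so G is isomorphic to the wreath product C₂ ≀ Sym_{n/2}). -/

import Mathlib

/-- A string group generated by involutions (sggi): each generator has order 2 and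
nonconsecutive generators commute. -/
def IsSggi {n r : ℕ} (ρ : Fin r → Equiv.Perm (Fin n)) : Prop :=
  (∀ i, orderOf (ρ i) = 2) ∧
  ∀ i j : Fin r, 1 < |((i : ℕ) : ℤ) - ((j : ℕ) : ℤ)| → (ρ i * ρ j) ^ 2 = 1

/-- A string C-group: an sggi satisfying the intersection property. -/
def IsStringC {n r : ℕ} (ρ : Fin r → Equiv.Perm (Fin n)) : Prop :=
  IsSggi ρ ∧ ∀ J K : Set (Fin r),
    Subgroup.closure (ρ '' J) ⊓ Subgroup.closure (ρ '' K) =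
      Subgroup.closure (ρ '' (J ∩ K))

/-!
An elementary abelian 2-group of permutations of `m` points has order at most `2 ^ (m / 2)`. The
images of the generators in `L` form a string of at least `m - 2` independent involutions, whose
members in positions of equal parity commute. Those in even positions (`m` odd), or those in odd
positions from `3` on together with elements of the group of the first two (`m` even), generate such
a group of nearly maximal order, while each generator of the string commutes with a subgroup of
index at most 4 of it. Without transpositions, the generators would therefore permute its orbits,
against primitivity, or preserve a set of at most 6 points. So a transposition appears, and the
image of `G`, being primitive, is the whole symmetric group.

Elements fixing every fiber are flips of the fibers over a set of points. The sets flipped by a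
subgroup containing `G_L` form a permutation module over the field with two elements, whose only
submodules are zero, the constants, the even sets and everything. Modulo `G_L` both generators
outside `L` are flips, and the intersection property forces one of them, `s`, to be the flip of all
fibers and the other to be an even set not everything. Hence `m` is odd, `G_L` contains no flip and
`G` contains them all. Finally `s` commutes with each `l` in `L`: on a large set `U` of
pairwise commuting labels in `L` that commute with both, the group `G_U` is so large that otherwise
it contains the square or the cube of the flip of all fibers times `ρ s * ρ l`, which the
intersection property excludes.
-/

open scoped Pointwise symmDiff

open Equiv MulAction Subgroup

/-! ### Elementary abelian 2-groups of permutations -/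

section ElementaryTwo

variable {G : Type*} [Group G]

theorem commute_of_mem_closure {S : Set G} {x : G} (h : ∀ s ∈ S, Commute x s) :
    ∀ g ∈ closure S, Commute x g :=
  fun _ hg => (mem_centralizer_singleton_iff.1 ((closure_le (centralizer {x})).2
    (fun s hs => mem_centralizer_singleton_iff.2 (h s hs).symm) hg)).symm

theorem commute_of_mul_self {x y : G} (hx : x * x = 1) (hy : y * y = 1)
    (hxy : (x * y) * (x * y) = 1) : Commute x y := by
  rw [mul_eq_one_iff_eq_inv, mul_inv_rev, inv_eq_of_mul_eq_one_left hx,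
    inv_eq_of_mul_eq_one_left hy] at hxy
  exact hxy

/-- A subgroup all of whose elements square to the identity: an elementary abelian `2`-group. -/
def IsElementaryTwo (E : Subgroup G) : Prop := ∀ e ∈ E, e * e = 1

theorem isElementaryTwo_closure {S : Set G} (hsq : ∀ s ∈ S, s * s = 1)
    (hcomm : ∀ s ∈ S, ∀ t ∈ S, Commute s t) : IsElementaryTwo (closure S) := by
  intro g hg
  induction hg using closure_induction with
  | mem s hs => exact hsq s hs
  | one => exact one_mul 1
  | mul e f he hf hee hff =>
    have hef : Commute e f := commute_of_mem_closure
      (fun s hs => (commute_of_mem_closure (hcomm s hs) e he).symm) f hf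
    rw [hef.symm.mul_mul_mul_comm, hee, hff, one_mul]
  | inv e _ hee => rw [← mul_inv_rev, hee, inv_one]

namespace IsElementaryTwo

variable {E F : Subgroup G}

theorem mono (hE : IsElementaryTwo E) (h : F ≤ E) : IsElementaryTwo F :=
  fun e he => hE e (h he)

theorem commute (hE : IsElementaryTwo E) {e f : G} (he : e ∈ E) (hf : f ∈ E) : Commute e f :=
  commute_of_mul_self (hE e he) (hE f hf) (hE _ (mul_mem he hf))

theorem isPGroup (hE : IsElementaryTwo E) : IsPGroup 2 E :=
  fun e => ⟨1, Subtype.ext (by simpa [pow_two] using hE e e.2)⟩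

theorem closure_insert (hE : IsElementaryTwo E) {x : G} (hx : x * x = 1)
    (hxE : ∀ e ∈ E, Commute x e) : IsElementaryTwo (closure (insert x (E : Set G))) := by
  refine isElementaryTwo_closure ?_ ?_
  · rintro s (rfl | hs)
    exacts [hx, hE s hs]
  · rintro s (rfl | hs) t (rfl | ht)
    exacts [Commute.refl _, hxE t ht, (hxE s hs).symm, hE.commute hs ht]

end IsElementaryTwo

theorem mem_or_mul_mem_of_mem_closure_insert {S : Set G} {x d : G} (hx : x * x = 1)
    (hxS : ∀ s ∈ S, Commute x s) (hd : d ∈ closure (insert x S)) :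
    d ∈ closure S ∨ x * d ∈ closure S := by
  have hmul : ∀ s ∈ closure S, ∀ d, d ∈ closure S ∨ x * d ∈ closure S →
      s * d ∈ closure S ∨ x * (s * d) ∈ closure S := by
    rintro s hs d (hd | hd)
    · exact Or.inl (mul_mem hs hd)
    · rw [← mul_assoc, (commute_of_mem_closure hxS s hs).eq, mul_assoc]
      exact Or.inr (mul_mem hs hd)
  have hmulx : ∀ d, d ∈ closure S ∨ x * d ∈ closure S →
      x * d ∈ closure S ∨ x * (x * d) ∈ closure S := by
    intro d hd
    rwa [← mul_assoc, hx, one_mul, or_comm]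
  induction hd using closure_induction_left with
  | one => exact Or.inl (one_mem _)
  | mul_left s hs d _ hd =>
    rcases hs with rfl | hs
    exacts [hmulx d hd, hmul s (subset_closure hs) d hd]
  | inv_mul_cancel s hs d _ hd =>
    rcases hs with rfl | hs
    · rw [inv_eq_of_mul_eq_one_left hx]
      exact hmulx d hd
    · exact hmul _ (inv_mem (subset_closure hs)) d hd

variable [Finite G]

theorem card_closure_insert_le {S : Set G} {x : G} (hx : x * x = 1)
    (hxS : ∀ s ∈ S, Commute x s) : Nat.card (closure (insert x S)) ≤ 2 * Nat.card (closure S) := by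
  have hsub : (closure (insert x S) : Set G) ⊆ closure S ∪ (x * ·) '' closure S := fun d hd =>
    (mem_or_mul_mem_of_mem_closure_insert hx hxS hd).imp_right
      fun h => ⟨x * d, h, by dsimp only; rw [← mul_assoc, hx, one_mul]⟩
  calc Nat.card (closure (insert x S)) = (closure (insert x S) : Set G).ncard := rfl
    _ ≤ (closure S : Set G).ncard + ((x * ·) '' closure S).ncard :=
      (Set.ncard_le_ncard hsub).trans (Set.ncard_union_le _ _)
    _ ≤ (closure S : Set G).ncard + (closure S : Set G).ncard :=
      Nat.add_le_add_left (Set.ncard_image_le) _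
    _ = 2 * Nat.card (closure S) := (two_mul _).symm

theorem card_closure_union_le {S F : Set G} (hsq : ∀ s ∈ F, s * s = 1)
    (hcomm : ∀ s ∈ F, ∀ t ∈ S ∪ F, Commute s t) :
    Nat.card (closure (S ∪ F)) ≤ 2 ^ F.ncard * Nat.card (closure S) := by
  induction F, F.toFinite using Set.Finite.induction_on with
  | empty => simp
  | @insert x F hxF _ ih =>
    have hF := ih (fun s hs => hsq s (Or.inr hs))
      fun s hs t ht => hcomm s (Or.inr hs) t (ht.imp_right Or.inr)
    rw [Set.union_insert, Set.ncard_insert_of_notMem hxF, pow_succ']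
    calc Nat.card (closure (insert x (S ∪ F)))
        ≤ 2 * Nat.card (closure (S ∪ F)) := card_closure_insert_le (hsq x (Or.inl rfl))
          fun s hs => hcomm x (Or.inl rfl) s (hs.imp_right Or.inr)
      _ ≤ 2 * 2 ^ F.ncard * Nat.card (closure S) := by rw [mul_assoc]; gcongr

theorem two_mul_card_le_of_lt {E F : Subgroup G} (h : E < F) :
    2 * Nat.card E ≤ Nat.card F := by
  obtain ⟨k, hk⟩ := card_dvd_of_le h.le
  have hF : 0 < Nat.card F := Nat.card_pos
  have hk1 : k ≠ 1 := by
    rintro rfl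
    exact h.ne (eq_of_le_of_card_ge h.le (by omega))
  rw [hk, mul_comm]
  exact Nat.mul_le_mul_left _ ((Nat.two_le_iff k).2 ⟨by rintro rfl; omega, hk1⟩)

theorem two_mul_card_le_card_closure_insert {S : Set G} {x : G} (hx : x ∉ closure S) :
    2 * Nat.card (closure S) ≤ Nat.card (closure (insert x S)) :=
  two_mul_card_le_of_lt <| lt_of_le_of_ne (closure_mono (Set.subset_insert _ _))
    fun h => hx (h ▸ subset_closure (Set.mem_insert _ _))

end ElementaryTwo

section Orbits

variable {α : Type*} {E F : Subgroup (Perm α)} {x y : α}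

theorem apply_apply_comm {f g : Perm α} (h : Commute f g) (x : α) : f (g x) = g (f x) :=
  Equiv.congr_fun h.eq x

theorem apply_apply_of_mul_self {f : Perm α} (h : f * f = 1) (x : α) : f (f x) = x :=
  Equiv.congr_fun h x

theorem mem_orbit_iff_exists_mem : y ∈ orbit E x ↔ ∃ e ∈ E, e x = y :=
  ⟨fun ⟨e, he⟩ => ⟨e, e.2, he⟩, fun ⟨e, he, h⟩ => ⟨⟨e, he⟩, h⟩⟩

theorem apply_mem_orbit {e : Perm α} (he : e ∈ E) (x : α) : e x ∈ orbit E x :=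
  mem_orbit_iff_exists_mem.2 ⟨e, he, rfl⟩

theorem le_fixingSubgroup_iff {Y : Set α} :
    E ≤ fixingSubgroup (Perm α) Y ↔ ∀ e ∈ E, ∀ y ∈ Y, e y = y :=
  forall₂_congr fun _ _ => mem_fixingSubgroup_iff _

theorem le_fixingSubgroup_union {Y Z : Set α} (hY : E ≤ fixingSubgroup (Perm α) Y)
    (hZ : E ≤ fixingSubgroup (Perm α) Z) : E ≤ fixingSubgroup (Perm α) (Y ∪ Z) := by
  rw [fixingSubgroup_union]
  exact le_inf hY hZ

theorem orbit_subset_orbit (h : F ≤ E) (x : α) : orbit F x ⊆ orbit E x :=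
  fun _ hy => let ⟨f, hf, hfx⟩ := mem_orbit_iff_exists_mem.1 hy
    mem_orbit_iff_exists_mem.2 ⟨f, h hf, hfx⟩

theorem disjoint_orbit_of_notMem (h : y ∉ orbit E x) : Disjoint (orbit E x) (orbit E y) :=
  (orbit.eq_or_disjoint x y).resolve_left fun he => h (he ▸ mem_orbit_self y)

theorem disjoint_orbit_of_le_fixingSubgroup {Y : Set α} (hY : E ≤ fixingSubgroup (Perm α) Y)
    (hx : x ∉ Y) : Disjoint Y (orbit E x) := by
  rw [Set.disjoint_right]
  intro y hyx hy
  obtain ⟨e, he, rfl⟩ := mem_orbit_iff_exists_mem.1 hyx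
  have h : e (e x) = e x := le_fixingSubgroup_iff.1 hY e he _ hy
  exact hx (e.injective h ▸ hy)

/-- The stabilizer of a point inside a subgroup, as a subgroup of the whole symmetric group. -/
def stabilizerIn (E : Subgroup (Perm α)) (x : α) : Subgroup (Perm α) :=
  E ⊓ stabilizer (Perm α) x

theorem mem_stabilizerIn {e : Perm α} : e ∈ stabilizerIn E x ↔ e ∈ E ∧ e x = x := Iff.rfl

theorem stabilizerIn_le : stabilizerIn E x ≤ E := inf_le_left

theorem stabilizerIn_apply {v : Perm α} (hv : ∀ e ∈ E, Commute v e) (x : α) :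
    stabilizerIn E (v x) = stabilizerIn E x := by
  ext e
  simp only [mem_stabilizerIn]
  refine and_congr_right fun he => ?_
  rw [← apply_apply_comm (hv e he), v.injective.eq_iff]

theorem apply_mem_orbit_apply {v : Perm α} (hv : ∀ e ∈ E, Commute v e) (h : y ∈ orbit E x) :
    v y ∈ orbit E (v x) := by
  obtain ⟨e, he, rfl⟩ := mem_orbit_iff_exists_mem.1 h
  rw [apply_apply_comm (hv e he)]
  exact apply_mem_orbit he _

theorem ncard_orbit_mul_card_stabilizerIn (E : Subgroup (Perm α)) (x : α) :
    (orbit E x).ncard * Nat.card (stabilizerIn E x) = Nat.card E := by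
  have hmap : (stabilizer E x).map E.subtype = stabilizerIn E x := by
    ext e
    exact ⟨fun ⟨f, hf, hfe⟩ => hfe ▸ ⟨f.2, hf⟩, fun he => ⟨⟨e, he.1⟩, he.2, rfl⟩⟩
  rw [← hmap, card_subtype, ← index_stabilizer, mul_comm, card_mul_index]

theorem ncard_orbit_eq_of_stabilizerIn_eq [Finite α] (h : stabilizerIn E x = stabilizerIn E y) :
    (orbit E x).ncard = (orbit E y).ncard := by
  have hx := ncard_orbit_mul_card_stabilizerIn E x
  have hy := ncard_orbit_mul_card_stabilizerIn E y
  rw [h] at hx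
  exact Nat.eq_of_mul_eq_mul_right Nat.card_pos (hx.trans hy.symm)

theorem le_fixingSubgroup_singleton_of_ncard_orbit_eq_one (h : (orbit E x).ncard = 1) :
    E ≤ fixingSubgroup (Perm α) {x} := by
  rw [le_fixingSubgroup_iff]
  intro e he z hz
  rw [Set.mem_singleton_iff.1 hz]
  obtain ⟨y, hy⟩ := Set.ncard_eq_one.1 h
  have hx : x ∈ orbit E x := mem_orbit_self x
  have hex := apply_mem_orbit he x
  rw [hy] at hx hex
  exact hex.trans hx.symm

theorem eq_univ_of_mapsTo {S : Set (Perm α)} (hS : IsPretransitive (closure S) α)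
    {Y : Set α} (hY : Y.Nonempty) (hSY : ∀ s ∈ S, ∀ y, s y ∈ Y ↔ y ∈ Y) : Y = Set.univ := by
  have hclosure : closure S ≤ stabilizer (Perm α) Y := (closure_le _).2 fun s hs => by
    rw [SetLike.mem_coe, mem_stabilizer_set]
    exact hSY s hs
  obtain ⟨y, hy⟩ := hY
  refine Set.eq_univ_of_forall fun z => ?_
  obtain ⟨g, rfl⟩ := exists_smul_eq (closure S) y z
  exact (mem_stabilizer_set.1 (hclosure g.2) y).2 hy

theorem sq_two_pow_le_two_pow_two_pow {s : ℕ} (hs : s ≠ 0) : (2 ^ s) ^ 2 ≤ 2 ^ 2 ^ s := by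
  rw [← pow_mul]
  refine Nat.pow_le_pow_right two_pos ?_
  obtain rfl | hs2 := eq_or_ne s 1
  · norm_num
  · induction s, (by omega : 2 ≤ s) using Nat.le_induction with
    | base => norm_num
    | succ s hs ih =>
      have := ih (by omega) (by omega)
      rw [pow_succ]
      omega

namespace IsElementaryTwo

theorem stabilizerIn_le_fixingSubgroup_orbit (hE : IsElementaryTwo E) (x : α) :
    stabilizerIn E x ≤ fixingSubgroup (Perm α) (orbit E x) := by
  rw [le_fixingSubgroup_iff]
  rintro e ⟨he, hex⟩ y hy
  obtain ⟨f, hf, rfl⟩ := mem_orbit_iff_exists_mem.1 hy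
  rw [apply_apply_comm (hE.commute he hf)]
  exact congrArg f hex

variable [Finite α]

theorem exists_ncard_orbit_eq_two_pow (hE : IsElementaryTwo E) (x : α) :
    ∃ s, (orbit E x).ncard = 2 ^ s :=
  hE.isPGroup.card_orbit x

theorem sq_card_mul_two_pow_le (hE : IsElementaryTwo E) {Y : Set α}
    (hY : E ≤ fixingSubgroup (Perm α) Y) :
    Nat.card E ^ 2 * 2 ^ Y.ncard ≤ 2 ^ Nat.card α := by
  induction hn : Nat.card E using Nat.strong_induction_on generalizing E Y with
  | _ n ih =>
    subst hn
    obtain hfix | ⟨x, hx⟩ := or_iff_not_imp_left.2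
      fun h : ¬∀ x : α, (orbit E x).ncard = 1 => not_forall.1 h
    · have hbot : E = ⊥ := (Subgroup.eq_bot_iff_forall _).2 fun e he => Equiv.ext fun x =>
        le_fixingSubgroup_iff.1
          (le_fixingSubgroup_singleton_of_ncard_orbit_eq_one (hfix x)) e he x rfl
      rw [hbot, card_bot, one_pow, one_mul]
      exact Nat.pow_le_pow_right two_pos (Set.ncard_le_card Y)
    · obtain ⟨s, hs⟩ := hE.exists_ncard_orbit_eq_two_pow x
      have hs0 : s ≠ 0 := by
        rintro rfl
        exact hx hs
      have hcard := ncard_orbit_mul_card_stabilizerIn E x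
      have hxY : x ∉ Y := fun hxY => hx <| Set.ncard_eq_one.2 ⟨x, Set.eq_singleton_iff_unique_mem.2
        ⟨mem_orbit_self x, fun y hy => let ⟨e, he, h⟩ := mem_orbit_iff_exists_mem.1 hy
          h ▸ le_fixingSubgroup_iff.1 hY e he x hxY⟩⟩
      have hlt : Nat.card (stabilizerIn E x) < Nat.card E := by
        rw [← hcard, hs]
        exact lt_mul_of_one_lt_left Nat.card_pos (Nat.one_lt_two_pow hs0)
      have hbound := ih _ hlt (hE.mono stabilizerIn_le) (le_fixingSubgroup_union
        (stabilizerIn_le.trans hY) (hE.stabilizerIn_le_fixingSubgroup_orbit x)) rfl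
      rw [Set.ncard_union_eq (disjoint_orbit_of_le_fixingSubgroup hY hxY), hs, pow_add] at hbound
      calc Nat.card E ^ 2 * 2 ^ Y.ncard
          = Nat.card (stabilizerIn E x) ^ 2 * (2 ^ Y.ncard * (2 ^ s) ^ 2) := by
            rw [← hcard, hs]; ring
        _ ≤ Nat.card (stabilizerIn E x) ^ 2 * (2 ^ Y.ncard * 2 ^ 2 ^ s) := by
            exact Nat.mul_le_mul_left _ (Nat.mul_le_mul_left _ (sq_two_pow_le_two_pow_two_pow hs0))
        _ ≤ 2 ^ Nat.card α := hbound

end IsElementaryTwo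

end Orbits

section Extremal

variable {α : Type*} {E C : Subgroup (Perm α)} {Y : Set α}

theorem apply_mem_iff_of_mul_self {f : Perm α} (hf : f * f = 1) {S : Set α}
    (hfS : ∀ s ∈ S, f s ∈ S) (s : α) : f s ∈ S ↔ s ∈ S :=
  ⟨fun h => apply_apply_of_mul_self hf s ▸ hfS _ h, hfS s⟩

theorem exists_restrict {x : Perm α} {S : Set α} (hxS : ∀ s, x s ∈ S ↔ s ∈ S) :
    ∃ f : Perm α, (∀ s ∈ S, f s = x s) ∧ ∀ s ∉ S, f s = s := by
  classical
  exact ⟨(x.subtypePerm hxS).ofSubtype, fun s hs => Perm.ofSubtype_apply_of_mem _ hs,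
    fun s hs => Perm.ofSubtype_apply_of_not_mem _ hs⟩

theorem closure_insert_le_fixingSubgroup {x : Perm α} (hE : E ≤ fixingSubgroup (Perm α) Y)
    (hx : ∀ y ∈ Y, x y = y) :
    closure (insert x (E : Set (Perm α))) ≤ fixingSubgroup (Perm α) Y :=
  (closure_le _).2 <| Set.insert_subset ((mem_fixingSubgroup_iff _).2 hx) hE

namespace IsElementaryTwo

variable [Finite α]

theorem two_pow_ncard_le (hE : IsElementaryTwo E) (hY : E ≤ fixingSubgroup (Perm α) Y) {A : ℕ}
    (hcard : 2 ^ Nat.card α ≤ A * Nat.card E ^ 2) : 2 ^ Y.ncard ≤ A := by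
  refine Nat.le_of_mul_le_mul_left ?_ (pow_pos (Nat.card_pos (α := E)) 2)
  rw [mul_comm _ A]
  exact (hE.sq_card_mul_two_pow_le hY).trans hcard

theorem mem_of_forall_commute (hE : IsElementaryTwo E) (hY : E ≤ fixingSubgroup (Perm α) Y)
    (hcard : 2 ^ Nat.card α < 4 * (Nat.card E ^ 2 * 2 ^ Y.ncard)) {x : Perm α} (hx : x * x = 1)
    (hxE : ∀ e ∈ E, Commute x e) (hxY : ∀ y ∈ Y, x y = y) : x ∈ E := by
  by_contra h
  rw [← closure_eq E] at h
  have hgrow := two_mul_card_le_card_closure_insert h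
  have hbound := (hE.closure_insert hx hxE).sq_card_mul_two_pow_le
    (closure_insert_le_fixingSubgroup hY hxY)
  rw [closure_eq] at hgrow
  refine hcard.not_ge (le_trans ?_ hbound)
  calc 4 * (Nat.card E ^ 2 * 2 ^ Y.ncard) = (2 * Nat.card E) ^ 2 * 2 ^ Y.ncard := by ring
    _ ≤ _ := by gcongr

theorem exists_mem_restrict (hE : IsElementaryTwo E) (hY : E ≤ fixingSubgroup (Perm α) Y)
    (hcard : 2 ^ Nat.card α < 4 * (Nat.card E ^ 2 * 2 ^ Y.ncard)) {x : Perm α} (hx : x * x = 1)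
    (hxE : ∀ e ∈ E, Commute x e) {S : Set α} (hYS : Disjoint Y S) (hxS : ∀ s ∈ S, x s ∈ S)
    (hES : ∀ e ∈ E, ∀ s ∈ S, e s ∈ S) :
    ∃ f ∈ E, (∀ s ∈ S, f s = x s) ∧ ∀ s ∉ S, f s = s := by
  obtain ⟨f, hfS, hfSc⟩ := exists_restrict (apply_mem_iff_of_mul_self hx hxS)
  refine ⟨f, hE.mem_of_forall_commute hY hcard ?_ (fun e he => ?_)
    fun y hy => hfSc y (hYS.notMem_of_mem_left hy), hfS, hfSc⟩
  · ext s
    by_cases hs : s ∈ S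
    · simp [hfS s hs, hfS _ (hxS s hs), apply_apply_of_mul_self hx]
    · simp [hfSc s hs]
  · ext s
    by_cases hs : s ∈ S
    · simp [hfS s hs, hfS _ (hES e he s hs), apply_apply_comm (hxE e he)]
    · have hes : e s ∉ S := fun h => hs ((apply_mem_iff_of_mul_self (hE e he) (hES e he) s).1 h)
      simp [hfSc s hs, hfSc _ hes]

theorem ncard_orbit_eq_two_or_four (hE : IsElementaryTwo E)
    (hY : E ≤ fixingSubgroup (Perm α) Y)
    (hcard : 2 ^ Nat.card α ≤ Nat.card E ^ 2 * 2 ^ Y.ncard) {a : α} (ha : a ∉ Y) :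
    (orbit E a).ncard = 2 ∨ (orbit E a).ncard = 4 := by
  obtain ⟨s, hs⟩ := hE.exists_ncard_orbit_eq_two_pow a
  have hbound := (hE.mono stabilizerIn_le).two_pow_ncard_le
    (le_fixingSubgroup_union ((stabilizerIn_le (x := a)).trans hY)
      (hE.stabilizerIn_le_fixingSubgroup_orbit a)) (A := (orbit E a).ncard ^ 2 * 2 ^ Y.ncard)
    (hcard.trans_eq (by rw [← ncard_orbit_mul_card_stabilizerIn E a]; ring))
  rw [Set.ncard_union_eq (disjoint_orbit_of_le_fixingSubgroup hY ha), pow_add, mul_comm,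
    Nat.mul_le_mul_right_iff (by positivity), hs, ← pow_mul,
    Nat.pow_le_pow_iff_right one_lt_two] at hbound
  have hs3 : s < 3 := by
    by_contra! hs3
    refine hbound.not_gt ?_
    clear hbound hs
    induction s, hs3 using Nat.le_induction with
    | base => norm_num
    | succ s hs ih => rw [pow_succ]; omega
  interval_cases s
  · norm_num at hbound
  · exact Or.inl hs
  · exact Or.inr hs

theorem ncard_orbit_eq_four [DecidableEq α] (hE : IsElementaryTwo E) (hswap : ∀ e ∈ E, ¬ e.IsSwap)
    (hY : E ≤ fixingSubgroup (Perm α) Y)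
    (hcard : 2 ^ Nat.card α ≤ Nat.card E ^ 2 * 2 ^ Y.ncard) {a : α} (ha : a ∉ Y) :
    (orbit E a).ncard = 4 := by
  refine (hE.ncard_orbit_eq_two_or_four hY hcard ha).resolve_left fun h2 => ?_
  obtain ⟨c, hca, horb⟩ : ∃ c, c ≠ a ∧ orbit E a = {a, c} := by
    obtain ⟨c, hc⟩ := Set.ncard_eq_one.1
      (show (orbit E a \ {a}).ncard = 1 by
        rw [Set.ncard_sdiff_singleton_of_mem (mem_orbit_self a), h2])
    have hcmem : c ∈ orbit E a \ {a} := hc ▸ rfl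
    refine ⟨c, hcmem.2, ?_⟩
    rw [← Set.insert_eq_of_mem (mem_orbit_self a), ← Set.insert_sdiff_singleton, hc]
  obtain ⟨e, he, hea⟩ := mem_orbit_iff_exists_mem.1 (show c ∈ orbit E a by rw [horb]; simp)
  have hpos : 0 < Nat.card E ^ 2 * 2 ^ Y.ncard := by have := Nat.card_pos (α := E); positivity
  obtain ⟨f, hf, hforb, hfix⟩ := hE.exists_mem_restrict hY (by omega) (hE e he)
    (fun f hf => hE.commute he hf) (disjoint_orbit_of_le_fixingSubgroup hY ha)
    (fun s hs => mem_orbit_of_mem_orbit (⟨e, he⟩ : E) hs)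
    (fun f hf s hs => mem_orbit_of_mem_orbit (⟨f, hf⟩ : E) hs)
  refine hswap f hf ⟨a, c, hca.symm, Equiv.ext fun s => ?_⟩
  have hfa : f a = c := by rw [hforb a (mem_orbit_self a), hea]
  rcases eq_or_ne s a with rfl | hsa
  · rw [hfa, swap_apply_left]
  rcases eq_or_ne s c with rfl | hsc
  · rw [← hfa, apply_apply_of_mul_self (hE f hf), hfa, swap_apply_right]
  · rw [hfix s (by rw [horb]; simp [hsa, hsc]), swap_apply_of_ne_of_ne hsa hsc]

theorem orbit_eq_of_card_le_four_mul [DecidableEq α] (hE : IsElementaryTwo E)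
    (hswap : ∀ e ∈ E, ¬ e.IsSwap) (hCE : C ≤ E)
    (hCcard : Nat.card E ≤ 4 * Nat.card C) (hY : E ≤ fixingSubgroup (Perm α) Y)
    (hcard : 2 ^ Nat.card α ≤ Nat.card E ^ 2 * 2 ^ Y.ncard) {v : Perm α}
    (hv : ∀ e ∈ C, Commute v e) {p : α} (hpY : p ∉ Y) (hvpY : v p ∉ Y) (hvporb : v p ∉ orbit E p) :
    orbit C p = orbit E p := by
  have hp := hE.ncard_orbit_eq_four hswap hY hcard hpY
  have hvp := hE.ncard_orbit_eq_four hswap hY hcard hvpY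
  refine Set.eq_of_subset_of_ncard_le (orbit_subset_orbit hCE p) ?_
  have hsub (x : α) : stabilizerIn C x ≤ stabilizerIn E x := inf_le_inf_right _ hCE
  have hfix : stabilizerIn C p ≤ fixingSubgroup (Perm α) (Y ∪ orbit E p ∪ orbit E (v p)) := by
    refine le_fixingSubgroup_union (le_fixingSubgroup_union
      ((stabilizerIn_le.trans hCE).trans hY) ((hsub p).trans ?_)) ?_
    · exact hE.stabilizerIn_le_fixingSubgroup_orbit p
    · rw [← stabilizerIn_apply hv]
      exact (hsub _).trans (hE.stabilizerIn_le_fixingSubgroup_orbit _)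
  have hindex : Nat.card E ^ 2 ≤ (4 * (orbit C p).ncard) ^ 2 * Nat.card (stabilizerIn C p) ^ 2 := by
    rw [← mul_pow, mul_assoc, ncard_orbit_mul_card_stabilizerIn]
    exact Nat.pow_le_pow_left hCcard 2
  have hbound := (hE.mono (stabilizerIn_le.trans hCE)).two_pow_ncard_le hfix
    (A := (4 * (orbit C p).ncard) ^ 2 * 2 ^ Y.ncard)
    (hcard.trans (by rw [mul_right_comm]; gcongr))
  rw [Set.ncard_union_eq (Set.disjoint_union_left.2
      ⟨disjoint_orbit_of_le_fixingSubgroup hY hvpY, disjoint_orbit_of_notMem hvporb⟩),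
    Set.ncard_union_eq (disjoint_orbit_of_le_fixingSubgroup hY hpY), hp, hvp, add_assoc, pow_add,
    mul_comm, Nat.mul_le_mul_right_iff (by positivity)] at hbound
  rw [hp]
  exact Nat.le_of_mul_le_mul_left ((Nat.pow_le_pow_iff_left two_ne_zero).1
    (show 16 ^ 2 ≤ _ by exact_mod_cast hbound)) four_pos

end IsElementaryTwo

end Extremal

section Primitive

variable {α : Type*} {E : Subgroup (Perm α)} {S V : Set (Perm α)}

theorem smul_orbit_eq_of_mem_closure (hV : ∀ v ∈ V, ∀ x, v • orbit E x = orbit E (v x))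
    {g : Perm α} (hg : g ∈ closure V) (x : α) : g • orbit E x = orbit E (g x) := by
  induction hg using closure_induction generalizing x with
  | mem v hv => exact hV v hv x
  | one => exact one_smul _ _
  | mul g h _ _ hg hh => rw [mul_smul, hh, hg, Perm.mul_apply]
  | inv g _ hg =>
    rw [inv_smul_eq_iff, hg]
    exact congrArg (orbit E ·) (smul_inv_smul g x).symm

theorem isBlock_orbit (hV : ∀ v ∈ V, ∀ x, v • orbit E x = orbit E (v x)) (x : α) :
    IsBlock (closure V) (orbit E x) := by
  intro g h hgh
  have hsmul (g : closure V) : g • orbit E x = orbit E (g • x) :=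
    smul_orbit_eq_of_mem_closure hV g.2 x
  rw [hsmul, hsmul] at hgh ⊢
  exact (orbit.eq_or_disjoint _ _).resolve_left hgh

theorem smul_orbit_eq {v : Perm α} (hv : v * v = 1)
    (h : ∀ x, ∀ y ∈ orbit E x, v y ∈ orbit E (v x)) (x : α) : v • orbit E x = orbit E (v x) := by
  refine Set.Subset.antisymm (Set.smul_set_subset_iff.2 fun y hy => h x y hy) fun y hy =>
    ⟨v y, ?_, apply_apply_of_mul_self hv y⟩
  simpa only [apply_apply_of_mul_self hv] using h _ y hy

variable [Finite α]

theorem card_le_two_pow_ncard_mul_card_inf_centralizer (hsq : ∀ s ∈ S, s * s = 1)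
    (hcomm : ∀ s ∈ S, ∀ t ∈ S, Commute s t) (v : Perm α) :
    Nat.card (closure S) ≤ 2 ^ {s ∈ S | ¬ Commute v s}.ncard *
      Nat.card (closure S ⊓ centralizer {v} : Subgroup (Perm α)) := by
  have hunion : {s ∈ S | Commute v s} ∪ {s ∈ S | ¬ Commute v s} = S := by
    ext s
    simp only [Set.mem_union, Set.mem_ofPred_eq]
    tauto
  have hle : closure {s ∈ S | Commute v s} ≤ closure S ⊓ centralizer {v} :=
    (closure_le _).2 fun s hs =>
      ⟨subset_closure hs.1, mem_centralizer_singleton_iff.2 hs.2.symm.eq⟩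
  conv_lhs => rw [← hunion]
  exact (card_closure_union_le (fun s hs => hsq s hs.1)
    fun s hs t ht => hcomm s hs.1 t (hunion ▸ ht)).trans (by gcongr; exact card_le_of_le hle)

namespace IsElementaryTwo

theorem apply_mem_orbit_apply_of_card_le [DecidableEq α] (hE : IsElementaryTwo E)
    (hswap : ∀ e ∈ E, ¬ e.IsSwap) (hcard : 2 ^ Nat.card α ≤ Nat.card E ^ 2) {v : Perm α}
    (hv : Nat.card E ≤ 4 * Nat.card (E ⊓ centralizer {v} : Subgroup (Perm α))) {x y : α}
    (hy : y ∈ orbit E x) : v y ∈ orbit E (v x) := by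
  have hC : ∀ e ∈ E ⊓ centralizer {v}, Commute v e := fun e he =>
    (mem_centralizer_singleton_iff.1 he.2).symm
  have hmoved (x : α) (hx : v x ∉ orbit E x) (y : α) (hy : y ∈ orbit E x) :
      v y ∈ orbit E (v x) := by
    rw [← hE.orbit_eq_of_card_le_four_mul hswap inf_le_left hv (Y := ∅) (by simp) (by simpa)
      hC (Set.notMem_empty _) (Set.notMem_empty _) hx] at hy
    exact orbit_subset_orbit inf_le_left _ (apply_mem_orbit_apply hC hy)
  by_contra h
  have hx : v x ∈ orbit E x := by
    by_contra hx
    exact h (hmoved x hx y hy)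
  have hy' : v y ∉ orbit E y := fun hvy => h <| by
    rwa [orbit_eq_iff.2 hx, ← orbit_eq_iff.2 hy]
  exact h (mem_orbit_symm.1 (hmoved y hy' x (mem_orbit_symm.1 hy)))

theorem exists_isSwap_of_isPreprimitive [DecidableEq α] (hE : IsElementaryTwo E)
    (hm : 4 < Nat.card α) (hcard : 2 ^ Nat.card α ≤ Nat.card E ^ 2) (hVsq : ∀ v ∈ V, v * v = 1)
    (hV : ∀ v ∈ V, Nat.card E ≤ 4 * Nat.card (E ⊓ centralizer {v} : Subgroup (Perm α)))
    (hprim : IsPreprimitive (closure V) α) : ∃ e ∈ E, e.IsSwap := by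
  by_contra! hswap
  obtain ⟨x⟩ : Nonempty α := (Nat.card_pos_iff.1 (by omega)).1
  have horb := hE.ncard_orbit_eq_four hswap (Y := ∅) (by simp) (by simpa) (Set.notMem_empty x)
  have hblock : IsBlock (closure V) (orbit E x) := isBlock_orbit (fun v hv =>
    smul_orbit_eq (hVsq v hv) fun _ _ =>
      hE.apply_mem_orbit_apply_of_card_le hswap hcard (hV v hv)) x
  rcases hblock.subsingleton_or_eq_univ with h | h
  · have := Set.ncard_le_one_iff_subsingleton.2 h
    omega
  · rw [h, Set.ncard_univ] at horb
    omega

end IsElementaryTwo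

end Primitive

section FixedPoint

variable {α : Type*} {E : Subgroup (Perm α)} {V : Set (Perm α)} {v w : Perm α} {a z : α}

theorem apply_eq_self_of_le_fixingSubgroup {Y : Set α} (hY : E ≤ fixingSubgroup (Perm α) Y)
    {e : Perm α} (he : e ∈ E) {y : α} (hy : y ∈ Y) : e y = y :=
  le_fixingSubgroup_iff.1 hY e he y hy

theorem commute_of_mem_inf_centralizer {e : Perm α} (he : e ∈ E ⊓ centralizer {v}) :
    Commute v e :=
  (mem_centralizer_singleton_iff.1 he.2).symm

theorem apply_eq_self_of_commute {e : Perm α} (h : Commute v e) {x : α} (hx : e x = x) :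
    e (v x) = v x := by
  rw [← apply_apply_comm h, hx]

theorem notMem_orbit_of_le_fixingSubgroup (hz : E ≤ fixingSubgroup (Perm α) {z}) (ha : a ≠ z) :
    z ∉ orbit E a :=
  Set.disjoint_singleton_left.1 (disjoint_orbit_of_le_fixingSubgroup hz ha)

namespace IsElementaryTwo

theorem stabilizerIn_le_fixingSubgroup_insert (hE : IsElementaryTwo E)
    (hz : E ≤ fixingSubgroup (Perm α) {z}) (a : α) :
    stabilizerIn E a ≤ fixingSubgroup (Perm α) (insert z (orbit E a)) :=
  le_fixingSubgroup_union (stabilizerIn_le.trans hz) (hE.stabilizerIn_le_fixingSubgroup_orbit a)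

theorem exists_forall_apply_eq_self_of_odd (hE : IsElementaryTwo E) (hodd : Odd (Nat.card α)) :
    ∃ z : α, E ≤ fixingSubgroup (Perm α) {z} := by
  have : Fact (Nat.Prime 2) := ⟨Nat.prime_two⟩
  obtain ⟨z, hz⟩ := hE.isPGroup.nonempty_fixed_point_of_prime_not_dvd_card α hodd.not_two_dvd_nat
  exact ⟨z, le_fixingSubgroup_iff.2 fun e he y hy => by
    rw [Set.mem_singleton_iff.1 hy]
    exact hz ⟨e, he⟩⟩

variable [Finite α] [DecidableEq α] (hE : IsElementaryTwo E) (hswap : ∀ e ∈ E, ¬ e.IsSwap)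
  (hz : E ≤ fixingSubgroup (Perm α) {z}) (hcard : 2 ^ Nat.card α ≤ Nat.card E ^ 2 * 2)
include hE hswap hz hcard

theorem ncard_orbit_eq_four_of_ne (ha : a ≠ z) : (orbit E a).ncard = 4 :=
  hE.ncard_orbit_eq_four hswap hz (by simpa using hcard) ha

theorem mem_insert_orbit_of_forall_apply_eq_self (ha : a ≠ z) {q : α}
    (hq : ∀ e ∈ stabilizerIn E a, e q = q) : q ∈ insert z (orbit E a) := by
  by_contra hqn
  have h4 := hE.ncard_orbit_eq_four_of_ne hswap hz hcard ha
  have hbound := (hE.mono stabilizerIn_le).two_pow_ncard_le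
    (Y := insert q (insert z (orbit E a))) (A := 32)
    (le_fixingSubgroup_iff.2 fun e he => Set.forall_mem_insert.2 ⟨hq e he, fun _ =>
      apply_eq_self_of_le_fixingSubgroup (hE.stabilizerIn_le_fixingSubgroup_insert hz a) he⟩)
    (hcard.trans_eq (by rw [← ncard_orbit_mul_card_stabilizerIn E a, h4]; ring))
  rw [Set.ncard_insert_of_notMem hqn,
    Set.ncard_insert_of_notMem (notMem_orbit_of_le_fixingSubgroup hz ha), h4] at hbound
  norm_num at hbound

theorem stabilizerIn_apply_eq_inf_centralizer
    (hv : Nat.card E ≤ 4 * Nat.card (E ⊓ centralizer {v} : Subgroup (Perm α))) (hvz : v z ≠ z) :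
    stabilizerIn E (v z) = E ⊓ centralizer {v} := by
  have hle : E ⊓ centralizer {v} ≤ stabilizerIn E (v z) := fun e he =>
    ⟨he.1, apply_eq_self_of_commute (commute_of_mem_inf_centralizer he)
      (apply_eq_self_of_le_fixingSubgroup hz he.1 rfl)⟩
  have hindex := ncard_orbit_mul_card_stabilizerIn E (v z)
  rw [hE.ncard_orbit_eq_four_of_ne hswap hz hcard hvz] at hindex
  exact (eq_of_le_of_card_ge hle (by omega)).symm

theorem apply_mem_insert_orbit_of_forall_commute (ha : a ≠ z)
    (hw : ∀ e ∈ stabilizerIn E a, Commute w e) {q : α} (hq : q ∈ insert z (orbit E a)) :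
    w q ∈ insert z (orbit E a) :=
  hE.mem_insert_orbit_of_forall_apply_eq_self hswap hz hcard ha fun e he =>
    apply_eq_self_of_commute (hw e he)
      (apply_eq_self_of_le_fixingSubgroup (hE.stabilizerIn_le_fixingSubgroup_insert hz a) he hq)

theorem apply_mem_orbit_of_apply_eq_self
    (hw : Nat.card E ≤ 4 * Nat.card (E ⊓ centralizer {w} : Subgroup (Perm α))) (ha : a ≠ z)
    (hwz : w z = z) (hwa : w a = a) {q : α} (hq : q ∈ orbit E a) : w q ∈ orbit E a := by
  by_contra hn
  have hqz : q ≠ z := fun h => notMem_orbit_of_le_fixingSubgroup hz ha (h ▸ hq)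
  have hwqz : w q ≠ z := fun h => hqz (w.injective (h.trans hwz.symm))
  rw [← orbit_eq_iff.2 hq] at hn
  have haq : a ∈ orbit (E ⊓ centralizer {w} : Subgroup (Perm α)) q := by
    rw [hE.orbit_eq_of_card_le_four_mul hswap inf_le_left hw hz (by simpa using hcard)
      (fun _ => commute_of_mem_inf_centralizer) hqz hwqz hn]
    exact mem_orbit_symm.1 hq
  have hmem : a ∈ orbit E (w q) := hwa ▸ orbit_subset_orbit inf_le_left _
    (apply_mem_orbit_apply (fun _ => commute_of_mem_inf_centralizer) haq)
  rw [orbit_eq_iff.2 hq, mem_orbit_symm] at hn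
  exact hn hmem

theorem mem_union_orbit_of_forall_apply_eq_self {c u : α} (ha : a ≠ z) (hc : c ≠ z)
    (hca : c ∉ orbit E a) (hu : ∀ e ∈ E, e a = a → e c = c → e u = u) :
    u ∈ insert z (orbit E a) ∪ orbit E c := by
  by_contra hun
  have h4 {a : α} (ha : a ≠ z) := hE.ncard_orbit_eq_four_of_ne hswap hz hcard ha
  have hNc : stabilizerIn (stabilizerIn E a) c ≤ stabilizerIn E c :=
    inf_le_inf_right _ stabilizerIn_le
  have hfix : stabilizerIn (stabilizerIn E a) c ≤ fixingSubgroup (Perm α)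
      (insert u (insert z (orbit E a) ∪ orbit E c)) := by
    refine le_fixingSubgroup_iff.2 fun e he => Set.forall_mem_insert.2 ⟨hu e he.1.1 he.1.2 he.2,
      le_fixingSubgroup_iff.1 (le_fixingSubgroup_union ?_ ?_) e he⟩
    · exact stabilizerIn_le.trans (hE.stabilizerIn_le_fixingSubgroup_insert hz a)
    · exact hNc.trans (hE.stabilizerIn_le_fixingSubgroup_orbit c)
  have hindex : Nat.card E ≤ 16 * Nat.card (stabilizerIn (stabilizerIn E a) c) := by
    have hle := (Set.ncard_le_ncard (orbit_subset_orbit (F := stabilizerIn E a)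
      stabilizerIn_le c)).trans_eq (h4 hc)
    rw [← ncard_orbit_mul_card_stabilizerIn E a, h4 ha,
      ← ncard_orbit_mul_card_stabilizerIn (stabilizerIn E a) c, ← mul_assoc]
    gcongr
    omega
  have hbound := (hE.mono (stabilizerIn_le.trans stabilizerIn_le)).two_pow_ncard_le hfix
    (A := 16 ^ 2 * 2) (hcard.trans (by rw [mul_right_comm, ← mul_pow]; gcongr))
  rw [Set.ncard_insert_of_notMem hun,
    Set.ncard_union_eq (Set.disjoint_insert_left.2
      ⟨notMem_orbit_of_le_fixingSubgroup hz hc, disjoint_orbit_of_notMem hca⟩),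
    Set.ncard_insert_of_notMem (notMem_orbit_of_le_fixingSubgroup hz ha), h4 ha, h4 hc] at hbound
  norm_num at hbound

theorem commute_of_mem_stabilizerIn_apply
    (hv : Nat.card E ≤ 4 * Nat.card (E ⊓ centralizer {v} : Subgroup (Perm α))) (hvz : v z ≠ z) :
    ∀ e ∈ stabilizerIn E (v z), Commute v e := by
  rw [hE.stabilizerIn_apply_eq_inf_centralizer hswap hz hcard hv hvz]
  exact fun _ => commute_of_mem_inf_centralizer

theorem apply_mem_orbit_of_commute
    (hv : Nat.card E ≤ 4 * Nat.card (E ⊓ centralizer {v} : Subgroup (Perm α)))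
    (hw : Nat.card E ≤ 4 * Nat.card (E ⊓ centralizer {w} : Subgroup (Perm α)))
    (hvw : Commute v w) (hvsq : v * v = 1) (hwsq : w * w = 1) (hvz : v z ≠ z) (hwz : w z ≠ z) :
    w z ∈ orbit E (v z) := by
  by_contra hn
  have hCv := hE.commute_of_mem_stabilizerIn_apply hswap hz hcard hv hvz
  have hCw := hE.commute_of_mem_stabilizerIn_apply hswap hz hcard hw hwz
  rcases hE.mem_union_orbit_of_forall_apply_eq_self hswap hz hcard hvz hwz hn
    (fun e he hev hew => apply_eq_self_of_commute (hCv e ⟨he, hev⟩) hew) with h | h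
  · have hmem := hE.apply_mem_insert_orbit_of_forall_commute hswap hz hcard hvz hCv h
    rw [apply_apply_of_mul_self hvsq] at hmem
    exact hmem.elim hwz hn
  · have hmem := hE.apply_mem_insert_orbit_of_forall_commute hswap hz hcard hwz hCw (Or.inr h)
    rw [apply_apply_comm hvw, apply_apply_of_mul_self hwsq] at hmem
    exact hmem.elim hvz fun h => hn (mem_orbit_symm.1 h)

theorem apply_mem_insert_orbit_of_commute
    (hv : Nat.card E ≤ 4 * Nat.card (E ⊓ centralizer {v} : Subgroup (Perm α)))
    (hw : Nat.card E ≤ 4 * Nat.card (E ⊓ centralizer {w} : Subgroup (Perm α)))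
    (hvw : Commute v w) (hvsq : v * v = 1) (hwsq : w * w = 1) (hvz : v z ≠ z) {q : α}
    (hq : q ∈ insert z (orbit E (v z))) : w q ∈ insert z (orbit E (v z)) := by
  by_cases hwz : w z = z
  · obtain rfl | hq := hq
    · exact Or.inl hwz
    · exact Or.inr (hE.apply_mem_orbit_of_apply_eq_self hswap hz hcard hw hvz hwz
        (by rw [← apply_apply_comm hvw, hwz]) hq)
  · have horb := orbit_eq_iff.2
      (hE.apply_mem_orbit_of_commute hswap hz hcard hv hw hvw hvsq hwsq hvz hwz)
    rw [← horb] at hq ⊢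
    exact hE.apply_mem_insert_orbit_of_forall_commute hswap hz hcard hwz
      (hE.commute_of_mem_stabilizerIn_apply hswap hz hcard hw hwz) hq

end IsElementaryTwo

theorem IsElementaryTwo.exists_isSwap_of_odd [Finite α] [DecidableEq α] (hE : IsElementaryTwo E)
    (hm : 5 < Nat.card α) (hodd : Odd (Nat.card α)) (hcard : 2 ^ Nat.card α ≤ Nat.card E ^ 2 * 2)
    (hVsq : ∀ v ∈ V, v * v = 1) (hVcomm : ∀ v ∈ V, ∀ w ∈ V, Commute v w)
    (hV : ∀ v ∈ V, Nat.card E ≤ 4 * Nat.card (E ⊓ centralizer {v} : Subgroup (Perm α)))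
    {T : Set (Perm α)} (hT : T ⊆ E ∪ V) (htrans : IsPretransitive (closure T) α) :
    ∃ e ∈ E, e.IsSwap := by
  by_contra! hswap
  obtain ⟨z, hz⟩ := hE.exists_forall_apply_eq_self_of_odd hodd
  obtain ⟨Θ, hzΘ, hΘcard, hΘE, hΘV⟩ : ∃ Θ : Set α, z ∈ Θ ∧ Θ.ncard ≤ 5 ∧
      (∀ e ∈ E, ∀ q ∈ Θ, e q ∈ Θ) ∧ ∀ w ∈ V, ∀ q ∈ Θ, w q ∈ Θ := by
    by_cases hfix : ∃ v ∈ V, v z ≠ z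
    · obtain ⟨v, hv, hvz⟩ := hfix
      refine ⟨insert z (orbit E (v z)), Set.mem_insert _ _, ?_, fun e he q hq => ?_,
        fun w hw q => hE.apply_mem_insert_orbit_of_commute hswap hz hcard (hV v hv) (hV w hw)
          (hVcomm v hv w hw) (hVsq v hv) (hVsq w hw) hvz⟩
      · refine (Set.ncard_insert_le _ _).trans_eq ?_
        rw [hE.ncard_orbit_eq_four_of_ne hswap hz hcard hvz]
      · obtain rfl | hq := hq
        exacts [Or.inl (apply_eq_self_of_le_fixingSubgroup hz he rfl),
          Or.inr (mem_orbit_of_mem_orbit (⟨e, he⟩ : E) hq)]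
    · push Not at hfix
      refine ⟨{z}, rfl, by simp, fun e he q hq => ?_, fun w hw q hq => ?_⟩ <;>
        obtain rfl := Set.mem_singleton_iff.1 hq
      exacts [apply_eq_self_of_le_fixingSubgroup hz he rfl, hfix w hw]
  have huniv : Θ = Set.univ := eq_univ_of_mapsTo htrans ⟨z, hzΘ⟩ fun s hs => by
    obtain hs | hs := hT hs
    exacts [apply_mem_iff_of_mul_self (hE s hs) (hΘE s hs),
      apply_mem_iff_of_mul_self (hVsq s hs) (hΘV s hs)]
  rw [huniv, Set.ncard_univ] at hΘcard
  omega

end FixedPoint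

/-! ### Independent strings of involutions -/

theorem le_ncard_of_injective {ι : Type*} [Finite ι] {q : ℕ} {T : Set ι} (f : Fin q → ι)
    (hf : f.Injective) (hfT : ∀ a, f a ∈ T) : q ≤ T.ncard :=
  calc q = (Set.range f).ncard := by
        rw [← Set.image_univ, Set.ncard_image_of_injective _ hf, Set.ncard_univ, Nat.card_fin]
    _ ≤ T.ncard := Set.ncard_le_ncard (Set.range_subset_iff.2 hfT)

theorem two_pow_ncard_le_card_closure_image {G ι : Type*} [Group G] [Finite G] [Finite ι]
    {f : ι → G} {T : Set ι} (hf : ∀ i ∈ T, f i ∉ closure (f '' (T \ {i}))) :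
    2 ^ T.ncard ≤ Nat.card (closure (f '' T)) := by
  induction T, T.toFinite using Set.Finite.induction_on with
  | empty => simp
  | @insert i T hi _ ih =>
    have hle := ih fun j hj hmem => hf j (Or.inr hj)
      (closure_mono (Set.image_mono (Set.sdiff_subset_sdiff_left (Set.subset_insert i T))) hmem)
    have hiT : f i ∉ closure (f '' T) := by
      simpa only [Set.insert_sdiff_self_of_notMem hi] using hf i (Or.inl rfl)
    rw [Set.ncard_insert_of_notMem hi, pow_succ', Set.image_insert_eq]
    exact (Nat.mul_le_mul_left 2 hle).trans (two_mul_card_le_card_closure_insert hiT)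

theorem ncard_neighbors_le (j : Fin k) :
    {i : Fin k | (i : ℕ) + 1 = j ∨ (j : ℕ) + 1 = i}.ncard ≤ 2 := by
  have hsub : ((↑) : Fin k → ℕ) '' {i : Fin k | (i : ℕ) + 1 = j ∨ (j : ℕ) + 1 = i} ⊆
      {(j : ℕ) - 1, (j : ℕ) + 1} := by
    rintro _ ⟨i, hi | hi, rfl⟩
    · exact Or.inl (by omega)
    · exact Or.inr hi.symm
  rw [← Set.ncard_image_of_injective _ Fin.val_injective]
  exact (Set.ncard_le_ncard hsub).trans ((Set.ncard_insert_le _ _).trans (by simp))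

theorem commute_of_ne_succ {G : Type*} [Mul G] {k : ℕ} {f : Fin k → G}
    (hf : ∀ i j : Fin k, (i : ℕ) + 1 < j → Commute (f i) (f j)) {i j : Fin k}
    (hij : (i : ℕ) + 1 ≠ j) (hji : (j : ℕ) + 1 ≠ i) : Commute (f i) (f j) := by
  rcases lt_trichotomy (i : ℕ) j with hlt | heq | hgt
  · exact hf i j (by omega)
  · rw [Fin.ext heq]
  · exact (hf j i (by omega)).symm

/-- A string of involutions (nonconsecutive members commute) none of which lies in the group
generated by the others. -/
structure IsIndepString {α : Type*} {k : ℕ} (τ : Fin k → Perm α) : Prop where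
  sq : ∀ i, τ i * τ i = 1
  comm : ∀ i j : Fin k, (i : ℕ) + 1 < j → Commute (τ i) (τ j)
  indep : ∀ i, τ i ∉ closure (τ '' {i}ᶜ)

namespace IsIndepString

variable {α : Type*} {k : ℕ} {τ : Fin k → Perm α} {T U : Set (Fin k)}

theorem commute (h : IsIndepString τ) {i j : Fin k} (hij : (i : ℕ) + 1 ≠ j)
    (hji : (j : ℕ) + 1 ≠ i) : Commute (τ i) (τ j) :=
  commute_of_ne_succ h.comm hij hji

theorem mul_self_of_mem_image (h : IsIndepString τ) : ∀ s ∈ τ '' T, s * s = 1 := by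
  rintro _ ⟨i, -, rfl⟩
  exact h.sq i

theorem commute_of_mem_image (h : IsIndepString τ) (hT : ∀ i ∈ T, ∀ j ∈ T, (i : ℕ) + 1 ≠ j) :
    ∀ s ∈ τ '' T, ∀ t ∈ τ '' T, Commute s t := by
  rintro _ ⟨i, hi, rfl⟩ _ ⟨j, hj, rfl⟩
  exact h.commute (hT i hi j hj) (hT j hj i hi)

theorem isElementaryTwo_closure (h : IsIndepString τ)
    (hT : ∀ i ∈ T, ∀ j ∈ T, (i : ℕ) + 1 ≠ j) : IsElementaryTwo (closure (τ '' T)) :=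
  _root_.isElementaryTwo_closure h.mul_self_of_mem_image (h.commute_of_mem_image hT)

theorem closure_inf_closure_eq_bot (h : IsIndepString τ)
    (hT : ∀ i ∈ T, ∀ j ∈ T, (i : ℕ) + 1 ≠ j) (hTU : Disjoint T U) :
    closure (τ '' T) ⊓ closure (τ '' U) = ⊥ := by
  induction T, T.toFinite using Set.Finite.induction_on with
  | empty => simp
  | @insert i T hi _ ih =>
    rw [Set.disjoint_insert_left] at hTU
    have hbot := ih (fun i hi j hj => hT i (Or.inr hi) j (Or.inr hj)) hTU.2
    refine (Subgroup.eq_bot_iff_forall _).2 fun d ⟨hd, hdU⟩ => ?_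
    rw [SetLike.mem_coe, Set.image_insert_eq] at hd
    rcases mem_or_mul_mem_of_mem_closure_insert (h.sq i) (Set.forall_mem_image.2 fun j hj =>
      h.commute (hT i (Or.inl rfl) j (Or.inr hj)) (hT j (Or.inr hj) i (Or.inl rfl))) hd
      with hdT | hdT
    · exact (mem_bot (G := Perm α)).1 (hbot ▸ mem_inf.2 ⟨hdT, hdU⟩)
    · refine absurd ?_ (h.indep i)
      have hsub {W : Set (Fin k)} (hW : i ∉ W) : closure (τ '' W) ≤ closure (τ '' {i}ᶜ) :=
        closure_mono (Set.image_mono (Set.subset_compl_singleton_iff.2 hW))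
      rw [← mul_inv_cancel_right (τ i) d]
      exact mul_mem (hsub hi hdT) (inv_mem (hsub hTU.1 hdU))

theorem ncard_not_commute_le (h : IsIndepString τ) (T : Set (Fin k)) (j : Fin k) :
    {s ∈ τ '' T | ¬ Commute (τ j) s}.ncard ≤ 2 := by
  have hsub : {s ∈ τ '' T | ¬ Commute (τ j) s} ⊆
      τ '' {i : Fin k | (i : ℕ) + 1 = j ∨ (j : ℕ) + 1 = i} := by
    rintro _ ⟨⟨i, -, rfl⟩, hi⟩
    refine ⟨i, ?_, rfl⟩
    by_contra hij
    rw [Set.mem_ofPred_eq, not_or] at hij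
    exact hi (h.commute hij.2 hij.1)
  exact (Set.ncard_le_ncard hsub).trans ((Set.ncard_image_le).trans (ncard_neighbors_le j))

variable [Finite α]

theorem two_pow_le_card_closure (h : IsIndepString τ) {q : ℕ} (f : Fin q → Fin k)
    (hf : f.Injective) (hfT : ∀ a, f a ∈ T) : 2 ^ q ≤ Nat.card (closure (τ '' T)) :=
  (Nat.pow_le_pow_right two_pos (le_ncard_of_injective f hf hfT)).trans <|
    two_pow_ncard_le_card_closure_image fun i _ hmem => h.indep i <|
      closure_mono (Set.image_mono fun _ hj => hj.2) hmem

theorem exists_isSwap_of_odd [DecidableEq α] (h : IsIndepString τ) (hm : 5 < Nat.card α)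
    (hk : Nat.card α ≤ k + 2) (hodd : Odd (Nat.card α))
    (htrans : IsPretransitive (closure (Set.range τ)) α) :
    ∃ e ∈ closure (Set.range τ), e.IsSwap := by
  have hEven : ∀ i ∈ {i : Fin k | Even (i : ℕ)}, ∀ j ∈ {i : Fin k | Even (i : ℕ)},
      (i : ℕ) + 1 ≠ j := by
    intro i hi j hj hij
    rw [Set.mem_ofPred_eq, Nat.even_iff] at hi hj
    omega
  have hOdd : ∀ i ∈ {i : Fin k | ¬ Even (i : ℕ)}, ∀ j ∈ {i : Fin k | ¬ Even (i : ℕ)},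
      (i : ℕ) + 1 ≠ j := by
    intro i hi j hj hij
    rw [Set.mem_ofPred_eq, Nat.even_iff] at hi hj
    omega
  have hcard : 2 ^ Nat.card α ≤ Nat.card (closure (τ '' {i | Even (i : ℕ)})) ^ 2 * 2 :=
    calc 2 ^ Nat.card α ≤ (2 ^ ((k + 1) / 2)) ^ 2 * 2 := by
          rw [← pow_mul, ← pow_succ]
          rw [Nat.odd_iff] at hodd
          exact Nat.pow_le_pow_right two_pos (by omega)
      _ ≤ _ := by
          gcongr
          exact h.two_pow_le_card_closure (fun a => ⟨2 * a, by omega⟩)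
            (fun a c hac => by simpa [Fin.ext_iff] using hac) fun a => even_two_mul _
  have hV : ∀ v ∈ τ '' {i | ¬ Even (i : ℕ)}, Nat.card (closure (τ '' {i | Even (i : ℕ)})) ≤
      4 * Nat.card (closure (τ '' {i | Even (i : ℕ)}) ⊓ centralizer {v} : Subgroup (Perm α)) := by
    rintro _ ⟨j, -, rfl⟩
    exact (card_le_two_pow_ncard_mul_card_inf_centralizer h.mul_self_of_mem_image
      (h.commute_of_mem_image hEven) _).trans
      (Nat.mul_le_mul_right _ (Nat.pow_le_pow_right two_pos (h.ncard_not_commute_le _ j)))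
  have hrange : Set.range τ ⊆
      closure (τ '' {i | Even (i : ℕ)}) ∪ τ '' {i | ¬ Even (i : ℕ)} := by
    rintro _ ⟨i, rfl⟩
    by_cases hi : Even (i : ℕ)
    exacts [Or.inl (subset_closure ⟨i, hi, rfl⟩), Or.inr ⟨i, hi, rfl⟩]
  obtain ⟨e, he, hswap⟩ := (h.isElementaryTwo_closure hEven).exists_isSwap_of_odd hm hodd hcard
    h.mul_self_of_mem_image (h.commute_of_mem_image hOdd) hV hrange htrans
  exact ⟨e, closure_mono (Set.image_subset_range _ _) he, hswap⟩

end IsIndepString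

/-! ### Involutions with a unique common fixed point -/

section Involutions

variable {G : Type*} [Group G] {x y : G}

theorem semiconjBy_left_mul_inv (hx : x * x = 1) (hy : y * y = 1) :
    SemiconjBy x (x * y) (x * y)⁻¹ := by
  rw [SemiconjBy, mul_inv_rev, inv_mul_cancel_right, ← mul_assoc, hx, one_mul,
    inv_eq_of_mul_eq_one_left hy]

theorem semiconjBy_right_mul_inv (hx : x * x = 1) (hy : y * y = 1) :
    SemiconjBy y (x * y) (x * y)⁻¹ := by
  rw [SemiconjBy, mul_inv_rev, inv_eq_of_mul_eq_one_left hx, inv_eq_of_mul_eq_one_left hy,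
    mul_assoc]

theorem commute_pow_of_semiconjBy_inv {k : ℕ} (h : SemiconjBy x y y⁻¹) (hy : y ^ k * y ^ k = 1) :
    Commute x (y ^ k) := by
  have hk := h.pow_right k
  rwa [inv_pow, inv_eq_of_mul_eq_one_left hy] at hk

end Involutions

section FixedPoints

variable {α : Type*} {D : Subgroup (Perm α)} {v : Perm α} {ω : α}

theorem mem_fixedPoints_iff_forall_mem : ω ∈ fixedPoints D α ↔ ∀ e ∈ D, e ω = ω :=
  Subtype.forall

theorem le_fixingSubgroup_fixedPoints : D ≤ fixingSubgroup (Perm α) (fixedPoints D α) :=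
  le_fixingSubgroup_iff.2 fun e he _ hy => mem_fixedPoints_iff_forall_mem.1 hy e he

theorem apply_mem_fixedPoints (hv : ∀ e ∈ D, Commute v e) (hω : ω ∈ fixedPoints D α) :
    v ω ∈ fixedPoints D α :=
  mem_fixedPoints_iff_forall_mem.2 fun e he =>
    apply_eq_self_of_commute (hv e he) (mem_fixedPoints_iff_forall_mem.1 hω e he)

theorem mem_fixedPoints_of_ncard_orbit_eq_one (h : (orbit D ω).ncard = 1) :
    ω ∈ fixedPoints D α :=
  mem_fixedPoints_iff_forall_mem.2 fun _ he => apply_eq_self_of_le_fixingSubgroup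
    (le_fixingSubgroup_singleton_of_ncard_orbit_eq_one h) he (Set.mem_singleton ω)

theorem triple_subset_fixedPoints (hv : ∀ e ∈ D, Commute v e) (hω : ω ∈ fixedPoints D α) :
    {ω, v ω, v (v ω)} ⊆ fixedPoints D α := by
  have hvω := apply_mem_fixedPoints hv hω
  simp only [Set.insert_subset_iff, Set.singleton_subset_iff]
  exact ⟨hω, hvω, apply_mem_fixedPoints hv hvω⟩

theorem apply_ne_of_apply_apply_ne (hω : v (v ω) ≠ ω) : v ω ≠ ω :=
  fun h => hω (by rw [h, h])

theorem ncard_triple (hω : v (v ω) ≠ ω) : ({ω, v ω, v (v ω)} : Set α).ncard = 3 :=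
  have hvω := apply_ne_of_apply_apply_ne hω
  Set.ncard_eq_three.2 ⟨_, _, _, hvω.symm, hω.symm, (v.injective.ne hvω).symm, rfl⟩

theorem apply_notMem_orbit_of_apply_apply_notMem (hv : ∀ e ∈ D, Commute v e)
    (hω : v (v ω) ∉ orbit D ω) : v ω ∉ orbit D ω :=
  fun h => hω (orbit_eq_iff.2 h ▸ apply_mem_orbit_apply hv h)

theorem apply_mem_orbit_apply_iff (hv : ∀ e ∈ D, Commute v e) {y : α} :
    v y ∈ orbit D (v ω) ↔ y ∈ orbit D ω := by
  refine ⟨fun h => ?_, apply_mem_orbit_apply hv⟩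
  obtain ⟨e, he, hey⟩ := mem_orbit_iff_exists_mem.1 h
  rw [← apply_apply_comm (hv e he), v.injective.eq_iff] at hey
  exact hey ▸ apply_mem_orbit he ω

/-- The union of the `D`-orbits of `ω`, `v ω` and `v (v ω)`: when `v` commutes with `D`, they
all have the same stabilizer in `D`. -/
def orbitTriple (D : Subgroup (Perm α)) (v : Perm α) (ω : α) : Set α :=
  orbit D ω ∪ orbit D (v ω) ∪ orbit D (v (v ω))

theorem ncard_orbitTriple [Finite α] (hv : ∀ e ∈ D, Commute v e)
    (hω : v (v ω) ∉ orbit D ω) :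
    (orbitTriple D v ω).ncard = 3 * (orbit D ω).ncard := by
  have hvω := apply_notMem_orbit_of_apply_apply_notMem hv hω
  have hvvω : v (v ω) ∉ orbit D (v ω) := fun h => hvω ((apply_mem_orbit_apply_iff hv).1 h)
  have hn (x : α) : (orbit D (v x)).ncard = (orbit D x).ncard :=
    ncard_orbit_eq_of_stabilizerIn_eq (stabilizerIn_apply hv x)
  rw [orbitTriple, Set.ncard_union_eq (Set.disjoint_union_left.2
      ⟨disjoint_orbit_of_notMem hω, disjoint_orbit_of_notMem hvvω⟩),
    Set.ncard_union_eq (disjoint_orbit_of_notMem hvω), hn (v ω), hn ω]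
  ring

namespace IsElementaryTwo

theorem stabilizerIn_le_fixingSubgroup_orbitTriple (hD : IsElementaryTwo D)
    (hv : ∀ e ∈ D, Commute v e) (ω : α) : stabilizerIn D ω ≤
      fixingSubgroup (Perm α) (orbitTriple D v ω) := by
  refine le_fixingSubgroup_union (le_fixingSubgroup_union
    (hD.stabilizerIn_le_fixingSubgroup_orbit ω) ?_) ?_
  · rw [← stabilizerIn_apply hv]
    exact hD.stabilizerIn_le_fixingSubgroup_orbit (v ω)
  · rw [← stabilizerIn_apply hv, ← stabilizerIn_apply hv]
    exact hD.stabilizerIn_le_fixingSubgroup_orbit (v (v ω))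

theorem apply_apply_of_apply_mem_orbit (hD : IsElementaryTwo D) (hv : ∀ e ∈ D, Commute v e)
    (hω : v ω ∈ orbit D ω) : v (v ω) = ω := by
  obtain ⟨d, hd, hdω⟩ := mem_orbit_iff_exists_mem.1 hω
  rw [← hdω, apply_apply_comm (hv d hd), ← hdω, apply_apply_of_mul_self (hD d hd)]

variable [Finite α]

theorem two_pow_three_mul_ncard_orbit_le (hD : IsElementaryTwo D) (hv : ∀ e ∈ D, Commute v e)
    (hω : v (v ω) ∉ orbit D ω) {A : ℕ} (hcard : 2 ^ Nat.card α ≤ A * Nat.card D ^ 2) :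
    2 ^ (3 * (orbit D ω).ncard) ≤ A * (orbit D ω).ncard ^ 2 := by
  rw [← ncard_orbitTriple hv hω]
  refine (hD.mono stabilizerIn_le).two_pow_ncard_le
    (hD.stabilizerIn_le_fixingSubgroup_orbitTriple hv ω) ?_
  rwa [mul_assoc, ← mul_pow, ncard_orbit_mul_card_stabilizerIn]

theorem ncard_orbit_eq_one_or_two (hD : IsElementaryTwo D) (hv : ∀ e ∈ D, Commute v e)
    (hω : v (v ω) ∉ orbit D ω) (hcard : 2 ^ Nat.card α ≤ 16 * Nat.card D ^ 2) :
    (orbit D ω).ncard = 1 ∨ (orbit D ω).ncard = 2 := by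
  have hlarge : ∀ n ≥ 3, 16 * n ^ 2 < 2 ^ (3 * n) := by
    intro n hn
    induction n, hn using Nat.le_induction with
    | base => norm_num
    | succ n hn ih =>
      calc 16 * (n + 1) ^ 2 ≤ 8 * (16 * n ^ 2) := by nlinarith
        _ < 8 * 2 ^ (3 * n) := by gcongr
        _ = 2 ^ (3 * (n + 1)) := by rw [mul_add, pow_add, mul_comm]; norm_num
  have hpos : 0 < (orbit D ω).ncard := (Set.ncard_pos).2 ⟨ω, mem_orbit_self ω⟩
  have hle : (orbit D ω).ncard < 3 := by
    by_contra! h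
    exact (hlarge _ h).not_ge (hD.two_pow_three_mul_ncard_orbit_le hv hω hcard)
  omega

theorem exists_mem_eqOn_compl_fixedPoints (hD : IsElementaryTwo D)
    (hcard : 2 ^ Nat.card α ≤ Nat.card D ^ 2 * 2 ^ (fixedPoints D α).ncard) (hv : v * v = 1)
    (hvD : ∀ e ∈ D, Commute v e) : ∃ f ∈ D, ∀ s ∉ fixedPoints D α, f s = v s := by
  have hpos : 0 < Nat.card D ^ 2 * 2 ^ (fixedPoints D α).ncard := by
    have := Nat.card_pos (α := D)
    positivity
  have hcompl {w : Perm α} (hw : w * w = 1) (hwD : ∀ e ∈ D, Commute w e) :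
      ∀ s ∈ (fixedPoints D α)ᶜ, w s ∈ (fixedPoints D α)ᶜ := fun s hs hws =>
    hs (apply_apply_of_mul_self hw s ▸ apply_mem_fixedPoints hwD hws)
  obtain ⟨f, hf, hfv, -⟩ := hD.exists_mem_restrict le_fixingSubgroup_fixedPoints (by omega) hv hvD
    disjoint_compl_right (hcompl hv hvD) fun e he => hcompl (hD e he) fun d hd => hD.commute he hd
  exact ⟨f, hf, hfv⟩

variable {x y : Perm α}

theorem commute_of_pow_four_eq_one (hD : IsElementaryTwo D)
    (hcard : 2 ^ Nat.card α ≤ 8 * Nat.card D ^ 2) (hx : x * x = 1) (hy : y * y = 1)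
    (hxD : ∀ e ∈ D, Commute x e) (hyD : ∀ e ∈ D, Commute y e)
    (hq : (x * y) ^ 2 * (x * y) ^ 2 = 1) (hqD : (x * y) ^ 2 ∉ D) : Commute x y := by
  have hE := hD.closure_insert hq fun e he => ((hxD e he).mul_left (hyD e he)).pow_left 2
  have hgrow : 2 * Nat.card D ≤ Nat.card (closure (insert ((x * y) ^ 2) (D : Set (Perm α)))) := by
    refine two_mul_card_le_of_lt (lt_of_le_of_ne (fun d hd => subset_closure (Or.inr hd)) ?_)
    exact fun h => hqD (h ▸ subset_closure (Or.inl rfl))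
  have hmem {v : Perm α} (hv : v * v = 1) (hvq : Commute v ((x * y) ^ 2))
      (hvD : ∀ e ∈ D, Commute v e) : v ∈ closure (insert ((x * y) ^ 2) (D : Set (Perm α))) := by
    refine hE.mem_of_forall_commute (Y := ∅) (by simp) ?_ hv
      (commute_of_mem_closure (Set.forall_mem_insert.2 ⟨hvq, hvD⟩)) (by simp)
    have hpos : 0 < Nat.card D ^ 2 := pow_pos Nat.card_pos 2
    calc 2 ^ Nat.card α ≤ 8 * Nat.card D ^ 2 := hcard
      _ < 4 * (2 * Nat.card D) ^ 2 := by rw [mul_pow]; omega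
      _ ≤ _ := by
        rw [Set.ncard_empty, pow_zero, mul_one]
        exact Nat.mul_le_mul_left 4 (Nat.pow_le_pow_left hgrow 2)
  exact hE.commute (hmem hx (commute_pow_of_semiconjBy_inv (semiconjBy_left_mul_inv hx hy) hq) hxD)
    (hmem hy (commute_pow_of_semiconjBy_inv (semiconjBy_right_mul_inv hx hy) hq) hyD)

theorem fixedPoints_eq_of_notMem_orbit (hD : IsElementaryTwo D)
    (hcard : 2 ^ Nat.card α ≤ 8 * Nat.card D ^ 2) (hv : ∀ e ∈ D, Commute v e)
    (hω : v (v ω) ∉ orbit D ω) :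
    fixedPoints D α = {ω, v ω, v (v ω)} ∧ (fixedPoints D α).ncard = 3 := by
  have hone : (orbit D ω).ncard = 1 := by
    refine (hD.ncard_orbit_eq_one_or_two hv hω (hcard.trans (by omega))).resolve_right fun h => ?_
    simpa [h] using hD.two_pow_three_mul_ncard_orbit_le hv hω hcard
  have hvvω : v (v ω) ≠ ω := fun h => hω (h.symm ▸ mem_orbit_self ω)
  have hle : (fixedPoints D α).ncard ≤ 3 := (Nat.pow_le_pow_iff_right one_lt_two).1
    (hD.two_pow_ncard_le le_fixingSubgroup_fixedPoints hcard)
  have heq := Set.eq_of_subset_of_ncard_le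
    (triple_subset_fixedPoints hv (mem_fixedPoints_of_ncard_orbit_eq_one hone))
    (hle.trans_eq (ncard_triple hvvω).symm)
  exact ⟨heq.symm, heq ▸ ncard_triple hvvω⟩

theorem pow_three_apply_of_mem_fixedPoints (hD : IsElementaryTwo D)
    (hcard : 2 ^ Nat.card α ≤ 8 * Nat.card D ^ 2) (hv : ∀ e ∈ D, Commute v e)
    (hω : v (v ω) ∉ orbit D ω) {s : α} (hs : s ∈ fixedPoints D α) : v (v (v s)) = s := by
  obtain ⟨hfix, -⟩ := hD.fixedPoints_eq_of_notMem_orbit hcard hv hω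
  have hvvω : v (v ω) ≠ ω := fun h => hω (h.symm ▸ mem_orbit_self ω)
  have hcube : v (v (v ω)) = ω := by
    have hmem : v (v (v ω)) ∈ fixedPoints D α := apply_mem_fixedPoints hv (by simp [hfix])
    rw [hfix] at hmem
    rcases hmem with h | h | h
    exacts [h, absurd (v.injective h) hvvω,
      absurd (v.injective (v.injective h)) (apply_ne_of_apply_apply_ne hvvω)]
  rw [hfix] at hs
  rcases hs with rfl | rfl | rfl <;> simp only [hcube]

theorem pow_three_mem (hD : IsElementaryTwo D)
    (hcard : 2 ^ Nat.card α ≤ 8 * Nat.card D ^ 2) (hx : x * x = 1) (hy : y * y = 1)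
    (hxD : ∀ e ∈ D, Commute x e) (hyD : ∀ e ∈ D, Commute y e)
    (hω : (x * y) ((x * y) ω) ∉ orbit D ω) : (x * y) ^ 3 ∈ D := by
  have hp : ∀ e ∈ D, Commute (x * y) e := fun e he => (hxD e he).mul_left (hyD e he)
  obtain ⟨-, hthree⟩ := hD.fixedPoints_eq_of_notMem_orbit hcard hp hω
  have hcard' : 2 ^ Nat.card α ≤ Nat.card D ^ 2 * 2 ^ (fixedPoints D α).ncard := by
    rwa [hthree, mul_comm]
  obtain ⟨f, hf, hfx⟩ := hD.exists_mem_eqOn_compl_fixedPoints hcard' hx hxD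
  obtain ⟨g, hg, hgy⟩ := hD.exists_mem_eqOn_compl_fixedPoints hcard' hy hyD
  have hfg : f * g ∈ D := mul_mem hf hg
  suffices (x * y) ^ 3 = f * g from this ▸ hfg
  refine Equiv.ext fun s => ?_
  rw [show ((x * y) ^ 3) s = (x * y) ((x * y) ((x * y) s)) from rfl]
  by_cases hs : s ∈ fixedPoints D α
  · rw [hD.pow_three_apply_of_mem_fixedPoints hcard hp hω hs,
      mem_fixedPoints_iff_forall_mem.1 hs _ hfg]
  · have hys : y s ∉ fixedPoints D α := fun h =>
      hs (apply_apply_of_mul_self hy s ▸ apply_mem_fixedPoints hyD h)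
    have hps : (x * y) s = (f * g) s := by
      rw [Perm.mul_apply, Perm.mul_apply, hgy s hs, hfx _ hys]
    have hporb : (x * y) s ∈ orbit D s := by
      rw [hps]
      exact apply_mem_orbit hfg s
    rw [hD.apply_apply_of_apply_mem_orbit hp hporb, hps]

theorem sq_mem_or_pow_three_mem (hD : IsElementaryTwo D)
    (hcard : 2 ^ Nat.card α ≤ 8 * Nat.card D ^ 2) (hx : x * x = 1) (hy : y * y = 1)
    (hxD : ∀ e ∈ D, Commute x e) (hyD : ∀ e ∈ D, Commute y e) (hxy : ¬ Commute x y) :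
    (x * y) ^ 2 ∈ D ∨ (x * y) ^ 3 ∈ D := by
  by_cases h : ∀ ω, (x * y) ((x * y) ω) ∈ orbit D ω
  · refine Or.inl (by_contra fun hqD => hxy ?_)
    refine hD.commute_of_pow_four_eq_one hcard hx hy hxD hyD ?_ hqD
    refine Equiv.ext fun ω => ?_
    rw [pow_two]
    exact hD.apply_apply_of_apply_mem_orbit
      (fun e he => ((hxD e he).mul_left (hyD e he)).mul_left ((hxD e he).mul_left (hyD e he))) (h ω)
  · obtain ⟨ω, hω⟩ := not_forall.1 h
    exact Or.inr (hD.pow_three_mem hcard hx hy hxD hyD hω)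

end IsElementaryTwo

end FixedPoints

section PairOfInvolutions

theorem exists_commuting_involution {G : Type*} [Group G] {x y : G} (hx : x * x = 1)
    (hy : y * y = 1) (hy1 : y ≠ 1) (hxy : y ≠ x) (hp : (x * y) ^ 2 * (x * y) ^ 2 = 1) :
    ∃ e ∈ closure {x, y}, e * e = 1 ∧ e ≠ 1 ∧ e ≠ x ∧ Commute x e ∧ Commute y e := by
  have hxmem : x ∈ closure {x, y} := subset_closure (Or.inl rfl)
  have hymem : y ∈ closure {x, y} := subset_closure (Or.inr rfl)
  by_cases hq : (x * y) ^ 2 = 1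
  · exact ⟨y, hymem, hy, hy1, hxy, commute_of_mul_self hx hy (by rwa [← pow_two]), Commute.refl y⟩
  · have hxq := commute_pow_of_semiconjBy_inv (semiconjBy_left_mul_inv hx hy) hp
    have hyq := commute_pow_of_semiconjBy_inv (semiconjBy_right_mul_inv hx hy) hp
    refine ⟨_, pow_mem (mul_mem hxmem hymem) 2, hp, hq, fun h => hq ?_, hxq, hyq⟩
    have hcomm : Commute x y := (h ▸ hyq).symm
    rw [hcomm.mul_pow, pow_two, pow_two, hx, hy, one_mul]

variable {α : Type*}

theorem apply_eq_self_or_ne_of_ncard_eq_four [Finite α] [DecidableEq α] {u : Perm α} {Y : Set α}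
    (hY : Y.ncard = 4) (hu : u * u = 1) (hswap : ¬ u.IsSwap) (huY : ∀ s ∉ Y, u s = s) :
    (∀ s, u s = s) ∨ ∀ s ∈ Y, u s ≠ s := by
  have := Fintype.ofFinite α
  have hsub : (u.support : Set α) ⊆ Y := fun s hs => by
    by_contra h
    exact Perm.mem_support.1 hs (huY s h)
  have hle := Set.ncard_le_ncard hsub
  rw [Set.ncard_coe_finset, hY] at hle
  have hdvd : 2 ∣ u.support.card := Perm.two_dvd_card_support (by rwa [pow_two])
  have hne : u.support.card ≠ 2 := fun h => hswap (Perm.card_support_eq_two.1 h)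
  obtain h0 | h4 : u.support.card = 0 ∨ u.support.card = 4 := by omega
  · refine Or.inl fun s => ?_
    rw [Finset.card_eq_zero, Perm.support_eq_empty_iff] at h0
    rw [h0, Perm.one_apply]
  · refine Or.inr fun s hs => ?_
    have heq := Set.eq_of_subset_of_ncard_le hsub (by rw [hY, Set.ncard_coe_finset, h4])
    rw [← heq] at hs
    exact Perm.mem_support.1 hs

theorem apply_apply_mul_of_ncard_eq_four [Finite α] {x y : Perm α} {Y : Set α} {ω : α}
    (hY : Y.ncard = 4) (hx : x * x = 1) (hy : y * y = 1) (hxY : ∀ s ∈ Y, x s ∈ Y)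
    (hyY : ∀ s ∈ Y, y s ∈ Y) (hxne : ∀ s ∈ Y, x s ≠ s) (hyne : ∀ s ∈ Y, y s ≠ s) (hω : ω ∈ Y) :
    (x * y) ((x * y) ω) = ω := by
  have hxx := apply_apply_of_mul_self hx
  have hyy := apply_apply_of_mul_self hy
  simp only [Perm.mul_apply]
  obtain hxy | hxy := eq_or_ne (x ω) (y ω)
  · rw [← hxy, hxx, ← hxy, hxx]
  have huniq : ∀ s ∈ Y \ {ω, x ω, y ω}, ∀ t ∈ Y \ {ω, x ω, y ω}, s = t := by
    have hthree : ({ω, x ω, y ω} : Set α).ncard = 3 :=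
      Set.ncard_eq_three.2 ⟨_, _, _, (hxne ω hω).symm, (hyne ω hω).symm, hxy, rfl⟩
    refine (Set.ncard_le_one (Set.toFinite _)).1 ?_
    rw [Set.ncard_sdiff, hthree, hY]
    simp only [Set.insert_subset_iff, Set.singleton_subset_iff]
    exact ⟨hω, hxY ω hω, hyY ω hω⟩
  have hyx : y (x ω) = x (y ω) := by
    refine huniq _ ⟨hyY _ (hxY ω hω), ?_⟩ _ ⟨hxY _ (hyY ω hω), ?_⟩
    · rintro (h | h | h)
      · exact hxy (by rw [← hyy (x ω), h])
      · exact hyne _ (hxY ω hω) h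
      · exact hxne ω hω (y.injective h)
    · rintro (h | h | h)
      · exact hxy (by rw [← hxx (y ω), h])
      · exact hyne ω hω (x.injective h)
      · exact hxne _ (hyY ω hω) h
  rw [← hyx, hyy, hxx]

end PairOfInvolutions

section FourthPower

variable {α : Type*} {D : Subgroup (Perm α)} {v : Perm α} {ω : α}

namespace IsElementaryTwo

theorem apply_apply_notMem_orbit (hD : IsElementaryTwo D) (hv : ∀ e ∈ D, Commute v e)
    (hω : (v ^ 4) ω ≠ ω) : v (v ω) ∉ orbit D ω := fun h =>
  hω <| hD.apply_apply_of_apply_mem_orbit (fun e he => (hv e he).mul_left (hv e he)) h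

variable [Finite α]

theorem ncard_fixedPoints_eq_four (hD : IsElementaryTwo D) (heven : Even (Nat.card α))
    (hcard : 2 ^ Nat.card α ≤ 16 * Nat.card D ^ 2) (hv : ∀ e ∈ D, Commute v e)
    (hω : ω ∈ fixedPoints D α) (hvω : v (v ω) ≠ ω) : (fixedPoints D α).ncard = 4 := by
  have hge := Set.ncard_le_ncard (triple_subset_fixedPoints hv hω)
  rw [ncard_triple hvω] at hge
  have hle : (fixedPoints D α).ncard ≤ 4 := (Nat.pow_le_pow_iff_right one_lt_two).1
    (hD.two_pow_ncard_le le_fixingSubgroup_fixedPoints hcard)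
  have hmod : Nat.card α ≡ (fixedPoints D α).ncard [MOD 2] :=
    hD.isPGroup.card_modEq_card_fixedPoints α
  rw [Nat.ModEq, Nat.even_iff.1 heven] at hmod
  omega

theorem fixes_or_moves_fixedPoints [DecidableEq α] (hD : IsElementaryTwo D)
    (hfour : (fixedPoints D α).ncard = 4) (hcard : 2 ^ Nat.card α ≤ 16 * Nat.card D ^ 2)
    {x : Perm α} (hx : x * x = 1) (hxD : ∀ e ∈ D, Commute x e)
    (hswap : ∀ f ∈ D, ¬ (x * f).IsSwap) :
    (∀ s ∈ fixedPoints D α, x s = s) ∨ ∀ s ∈ fixedPoints D α, x s ≠ s := by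
  obtain ⟨f, hf, hfx⟩ := hD.exists_mem_eqOn_compl_fixedPoints
    (by rw [hfour, mul_comm]; exact hcard) hx hxD
  have hfY : ∀ s ∈ fixedPoints D α, f s = s := fun s hs => mem_fixedPoints_iff_forall_mem.1 hs f hf
  have hxf : (x * f) * (x * f) = 1 := by
    rw [(hxD f hf).symm.mul_mul_mul_comm, hx, hD f hf, one_mul]
  have hoff : ∀ s ∉ fixedPoints D α, (x * f) s = s := fun s hs => by
    rw [Perm.mul_apply, hfx s hs, apply_apply_of_mul_self hx]
  refine (apply_eq_self_or_ne_of_ncard_eq_four hfour hxf (hswap f hf) hoff).imp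
    (fun h s hs => ?_) fun h s hs => ?_
  · simpa [hfY s hs] using h s
  · simpa [hfY s hs] using h s hs

theorem exists_isSwap_of_mem_fixedPoints [DecidableEq α] (hD : IsElementaryTwo D)
    (heven : Even (Nat.card α)) (hcard : 2 ^ Nat.card α ≤ 16 * Nat.card D ^ 2) {x y : Perm α}
    (hx : x * x = 1) (hy : y * y = 1) (hxD : ∀ e ∈ D, Commute x e) (hyD : ∀ e ∈ D, Commute y e)
    (hω : ω ∈ fixedPoints D α) (hpω : (x * y) ((x * y) ω) ≠ ω) :
    ∃ f ∈ D, (x * f).IsSwap ∨ (y * f).IsSwap := by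
  by_contra! hswap
  have hfour := hD.ncard_fixedPoints_eq_four heven hcard
    (fun e he => (hxD e he).mul_left (hyD e he)) hω hpω
  rcases hD.fixes_or_moves_fixedPoints hfour hcard hx hxD fun f hf => (hswap f hf).1 with hX | hX
  · have hyω := apply_mem_fixedPoints hyD hω
    simp [hX _ hω, hX _ hyω, apply_apply_of_mul_self hy] at hpω
  rcases hD.fixes_or_moves_fixedPoints hfour hcard hy hyD fun f hf => (hswap f hf).2 with hY | hY
  · have hxω := apply_mem_fixedPoints hxD hω
    simp [hY _ hω, hY _ hxω, apply_apply_of_mul_self hx] at hpω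
  exact hpω <| apply_apply_mul_of_ncard_eq_four hfour hx hy
    (fun s hs => apply_mem_fixedPoints hxD hs) (fun s hs => apply_mem_fixedPoints hyD hs) hX hY hω

theorem ncard_orbit_stabilizerIn_eq_four [DecidableEq α] (hD : IsElementaryTwo D)
    (hswap : ∀ e ∈ D, ¬ e.IsSwap) (hv : ∀ e ∈ D, Commute v e)
    (hcard : 2 ^ Nat.card α ≤ 16 * Nat.card D ^ 2) (hω : v (v ω) ∉ orbit D ω)
    (htwo : (orbit D ω).ncard = 2) {s : α} (hs : s ∉ orbitTriple D v ω) :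
    (orbit (stabilizerIn D ω) s).ncard = 4 := by
  refine (hD.mono stabilizerIn_le).ncard_orbit_eq_four (fun e he => hswap e (stabilizerIn_le he))
    (hD.stabilizerIn_le_fixingSubgroup_orbitTriple hv ω) ?_ hs
  rw [ncard_orbitTriple hv hω, htwo]
  rw [← ncard_orbit_mul_card_stabilizerIn D ω, htwo] at hcard
  exact hcard.trans_eq (by ring)

theorem setOf_pow_four_apply_ne [DecidableEq α] (hD : IsElementaryTwo D)
    (hswap : ∀ e ∈ D, ¬ e.IsSwap) (hv : ∀ e ∈ D, Commute v e)
    (hcard : 2 ^ Nat.card α ≤ 16 * Nat.card D ^ 2) (hω : (v ^ 4) ω ≠ ω)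
    (htwo : (orbit D ω).ncard = 2) : {s | (v ^ 4) s ≠ s} = orbitTriple D v ω := by
  have hne {g : Perm α} (hg : Commute (v ^ 4) g) {s : α} (hs : (v ^ 4) s ≠ s) :
      (v ^ 4) (g s) ≠ g s := by
    rw [apply_apply_comm hg]
    exact g.injective.ne hs
  have horbit {s : α} (hs : (v ^ 4) s ≠ s) : ∀ y ∈ orbit D s, (v ^ 4) y ≠ y := by
    intro y hy
    obtain ⟨e, he, rfl⟩ := mem_orbit_iff_exists_mem.1 hy
    exact hne ((hv e he).pow_left 4) hs
  refine Set.Subset.antisymm (fun s hs => ?_) ?_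
  · by_contra hsΘ
    have hfour := hD.ncard_orbit_stabilizerIn_eq_four hswap hv hcard
      (hD.apply_apply_notMem_orbit hv hω) htwo hsΘ
    have hle := Set.ncard_le_ncard (orbit_subset_orbit (stabilizerIn_le (E := D) (x := ω)) s)
    have := hD.ncard_orbit_eq_one_or_two hv (hD.apply_apply_notMem_orbit hv hs) hcard
    omega
  · have hvω := hne (Commute.pow_self v 4) hω
    rintro s ((hs | hs) | hs)
    exacts [horbit hω s hs, horbit hvω s hs, horbit (hne (Commute.pow_self v 4) hvω) s hs]

theorem apply_mem_orbitTriple [DecidableEq α] (hD : IsElementaryTwo D)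
    (hswap : ∀ e ∈ D, ¬ e.IsSwap) (hv : ∀ e ∈ D, Commute v e)
    (hcard : 2 ^ Nat.card α ≤ 16 * Nat.card D ^ 2) (hω : v (v ω) ∉ orbit D ω)
    (htwo : (orbit D ω).ncard = 2) {w : Perm α}
    (hw : Nat.card D ≤ 2 * Nat.card (D ⊓ centralizer {w} : Subgroup (Perm α))) {θ : α}
    (hθ : θ ∈ orbitTriple D v ω) : w θ ∈ orbitTriple D v ω := by
  by_contra hwθ
  have hfour := hD.ncard_orbit_stabilizerIn_eq_four hswap hv hcard hω htwo hwθ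
  have hle : stabilizerIn (D ⊓ centralizer {w}) ω ≤ stabilizerIn (stabilizerIn D ω) (w θ) := by
    rintro e ⟨he, heω⟩
    have heD : e ∈ stabilizerIn D ω := ⟨he.1, heω⟩
    exact ⟨heD, apply_eq_self_of_commute (commute_of_mem_inf_centralizer he)
      (apply_eq_self_of_le_fixingSubgroup
        (hD.stabilizerIn_le_fixingSubgroup_orbitTriple hv ω) heD hθ)⟩
  have hcardle := card_le_of_le hle
  have horb := Set.ncard_le_ncard
    (orbit_subset_orbit (inf_le_left : D ⊓ centralizer {w} ≤ D) ω)
  have hC := ncard_orbit_mul_card_stabilizerIn (D ⊓ centralizer {w}) ω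
  have hDω := ncard_orbit_mul_card_stabilizerIn D ω
  have hN := ncard_orbit_mul_card_stabilizerIn (stabilizerIn D ω) (w θ)
  have hpos : 0 < Nat.card (stabilizerIn (stabilizerIn D ω) (w θ)) := Nat.card_pos
  rw [htwo] at horb hDω
  rw [hfour] at hN
  have := Nat.mul_le_mul horb hcardle
  omega

end IsElementaryTwo

end FourthPower

/-! ### Primitive strings generate the symmetric group -/

namespace IsIndepString

variable {α : Type*} {k : ℕ} {τ : Fin k → Perm α}

/-- The odd positions from `3` on: the involutions there commute with one another and with those
in positions `0` and `1`. -/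
def oddTail (k : ℕ) : Set (Fin k) := {i | Odd (i : ℕ) ∧ 3 ≤ (i : ℕ)}

theorem add_one_ne_of_mem_oddTail {i j : Fin k} (hi : i ∈ oddTail k) (hj : j ∈ oddTail k) :
    (i : ℕ) + 1 ≠ j := by
  have hi2 := Nat.odd_iff.1 hi.1
  have hj2 := Nat.odd_iff.1 hj.1
  omega

theorem isElementaryTwo_oddTail (h : IsIndepString τ) :
    IsElementaryTwo (closure (τ '' oddTail k)) :=
  h.isElementaryTwo_closure fun _ hi _ hj => add_one_ne_of_mem_oddTail hi hj

theorem commute_closure_oddTail (h : IsIndepString τ) {i : Fin k} (hi : (i : ℕ) ≤ 1) :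
    ∀ e ∈ closure (τ '' oddTail k), Commute (τ i) e :=
  commute_of_mem_closure <| by
    rintro _ ⟨j, hj, rfl⟩
    exact h.comm i j (by have := hj.2; omega)

theorem disjoint_oddTail_pair {i₀ i₁ : Fin k} (h₀ : (i₀ : ℕ) = 0) (h₁ : (i₁ : ℕ) = 1) :
    Disjoint (oddTail k) {i₀, i₁} := by
  rw [Set.disjoint_right]
  rintro i (rfl | rfl) hi
  exacts [by have := hi.2; omega, by have := hi.2; omega]

theorem notMem_closure_oddTail (h : IsIndepString τ) {i₀ i₁ : Fin k} (h₀ : (i₀ : ℕ) = 0)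
    (h₁ : (i₁ : ℕ) = 1) {e : Perm α} (he : e ∈ closure {τ i₀, τ i₁}) (he1 : e ≠ 1) :
    e ∉ closure (τ '' oddTail k) := fun hmem => he1 <| by
  have hbot := h.closure_inf_closure_eq_bot
    (fun _ hi _ hj => add_one_ne_of_mem_oddTail hi hj) (disjoint_oddTail_pair h₀ h₁)
  rw [Set.image_pair] at hbot
  exact (mem_bot (G := Perm α)).1 (hbot ▸ mem_inf.2 ⟨hmem, he⟩)

theorem ne_one (h : IsIndepString τ) (i : Fin k) : τ i ≠ 1 := fun hi =>
  h.indep i (hi ▸ one_mem _)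

theorem injective (h : IsIndepString τ) : τ.Injective := by
  intro i j hij
  by_contra hne
  exact h.indep i (hij ▸ subset_closure ⟨j, Ne.symm hne, rfl⟩)

theorem closure_insert_insert_image_le {i₀ i₁ : Fin k} {T : Set (Fin k)} {e : Perm α}
    (he : e ∈ closure {τ i₀, τ i₁}) :
    closure (insert (τ i₀) (insert e (τ '' T))) ≤ closure (Set.range τ) := by
  rw [closure_le, Set.insert_subset_iff, Set.insert_subset_iff]
  refine ⟨subset_closure ⟨i₀, rfl⟩, closure_mono ?_ he,
    (Set.image_subset_range _ _).trans subset_closure⟩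
  rintro _ (rfl | rfl)
  exacts [⟨i₀, rfl⟩, ⟨i₁, rfl⟩]

theorem isElementaryTwo_closure_insert_insert_oddTail (h : IsIndepString τ) {i₀ : Fin k}
    (h₀ : (i₀ : ℕ) = 0) {e : Perm α} (hee : e * e = 1) (hxe : Commute (τ i₀) e)
    (heD : ∀ s ∈ τ '' oddTail k, Commute e s) :
    IsElementaryTwo (closure (insert (τ i₀) (insert e (τ '' oddTail k)))) := by
  have hinsert := (h.isElementaryTwo_oddTail.closure_insert hee (commute_of_mem_closure heD)).mono
    (closure_mono (Set.insert_subset_insert subset_closure))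
  have hxD := h.commute_closure_oddTail (h₀.trans_le zero_le_one)
  exact (hinsert.closure_insert (h.sq i₀) (commute_of_mem_closure
    (Set.forall_mem_insert.2 ⟨hxe, fun s hs => hxD s (subset_closure hs)⟩))).mono
    (closure_mono (Set.insert_subset_insert subset_closure))

variable [Finite α]

theorem two_pow_le_sixteen_mul_sq_card_oddTail (h : IsIndepString τ) {m : ℕ} (heven : Even m)
    (hm : 4 ≤ m) (hk : m ≤ k + 2) : 2 ^ m ≤ 16 * Nat.card (closure (τ '' oddTail k)) ^ 2 :=
  have heven := Nat.even_iff.1 heven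
  calc 2 ^ m = 16 * (2 ^ ((m - 4) / 2)) ^ 2 := by
        rw [← pow_mul, show 16 = 2 ^ 4 from rfl, ← pow_add]
        congr 1
        omega
    _ ≤ 16 * Nat.card (closure (τ '' oddTail k)) ^ 2 := by
        refine Nat.mul_le_mul_left 16 (Nat.pow_le_pow_left ?_ 2)
        refine h.two_pow_le_card_closure (fun a => ⟨2 * a + 3, by omega⟩) (fun a b hab => ?_)
          fun a => ⟨⟨a + 1, by dsimp only; ring⟩, by dsimp only; omega⟩
        simpa [Fin.ext_iff] using hab

theorem four_mul_card_le_card_closure_insert (h : IsIndepString τ) {i₀ i₁ : Fin k}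
    (h₀ : (i₀ : ℕ) = 0) (h₁ : (i₁ : ℕ) = 1) {e : Perm α} (he : e ∈ closure {τ i₀, τ i₁})
    (hee : e * e = 1) (he1 : e ≠ 1) (hex : e ≠ τ i₀) (heD : ∀ s ∈ τ '' oddTail k, Commute e s) :
    4 * Nat.card (closure (τ '' oddTail k)) ≤
      Nat.card (closure (insert (τ i₀) (insert e (τ '' oddTail k)))) := by
  have hx : τ i₀ ∈ closure {τ i₀, τ i₁} := subset_closure (Or.inl rfl)
  have hxS : τ i₀ ∉ closure (insert e (τ '' oddTail k)) := fun hmem => by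
    rcases mem_or_mul_mem_of_mem_closure_insert hee heD hmem with hmem | hmem
    · exact h.notMem_closure_oddTail h₀ h₁ hx (h.ne_one i₀) hmem
    · refine h.notMem_closure_oddTail h₀ h₁ (mul_mem he hx) (fun h1 => hex ?_) hmem
      rw [eq_inv_of_mul_eq_one_left h1, inv_eq_of_mul_eq_one_left (h.sq i₀)]
  have hgrow := two_mul_card_le_card_closure_insert (h.notMem_closure_oddTail h₀ h₁ he he1)
  have := two_mul_card_le_card_closure_insert hxS
  omega

theorem ncard_not_commute_insert_le (h : IsIndepString τ) {i₀ i₁ : Fin k} (h₀ : (i₀ : ℕ) = 0)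
    (h₁ : (i₁ : ℕ) = 1) (hk : 3 < k) {e : Perm α} (he : e ∈ closure {τ i₀, τ i₁})
    (hxe : Commute (τ i₀) e) (hye : Commute (τ i₁) e) (j : Fin k) :
    {s ∈ insert (τ i₀) (insert e (τ '' oddTail k)) | ¬ Commute (τ j) s}.ncard ≤ 2 := by
  have hpair (s t : Perm α) : ({s, t} : Set (Perm α)).ncard ≤ 2 :=
    (Set.ncard_insert_le _ _).trans (by rw [Set.ncard_singleton])
  rcases le_or_gt (j : ℕ) 1 with hj1 | hj1
  · refine (Set.ncard_le_ncard ?_).trans (hpair (τ i₀) (τ i₁))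
    have hje : Commute (τ j) e := by
      obtain hj | hj : j = i₀ ∨ j = i₁ := by
        rw [Fin.ext_iff, Fin.ext_iff]
        omega
      exacts [hj ▸ hxe, hj ▸ hye]
    rintro s ⟨rfl | rfl | hs, hjs⟩
    exacts [Or.inl rfl, absurd hje hjs,
      absurd (h.commute_closure_oddTail hj1 s (subset_closure hs)) hjs]
  have hx : Commute (τ j) (τ i₀) := (h.comm i₀ j (by omega)).symm
  rcases Nat.eq_or_lt_of_le hj1 with hj2 | hj2
  · refine (Set.ncard_le_ncard ?_).trans (hpair e (τ ⟨3, hk⟩))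
    rintro s ⟨rfl | rfl | ⟨i, hi, rfl⟩, hjs⟩
    · exact absurd hx hjs
    · exact Or.inl rfl
    · refine Or.inr (congrArg τ (Fin.ext ?_))
      by_contra hi3
      refine hjs (h.comm j i ?_)
      have := hi.2
      dsimp only at hi3
      omega
  · refine (Set.ncard_le_ncard ?_).trans (h.ncard_not_commute_le (oddTail k) j)
    rintro s ⟨rfl | rfl | hs, hjs⟩
    · exact absurd hx hjs
    · refine absurd (commute_of_mem_closure ?_ s he) hjs
      rintro _ (rfl | rfl)
      exacts [hx, (h.comm i₁ j (by omega)).symm]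
    · exact ⟨hs, hjs⟩

-- Some involution of the dihedral group generated by the first two members commutes with `τ i₀`:
-- joined to `τ i₀` and the odd tail, it gives an elementary abelian group of extremal order.
theorem exists_isSwap_of_pow_four_eq_one [DecidableEq α] (h : IsIndepString τ)
    (heven : Even (Nat.card α)) (hm : 4 < Nat.card α) (hk : Nat.card α ≤ k + 2) {i₀ i₁ : Fin k}
    (h₀ : (i₀ : ℕ) = 0) (h₁ : (i₁ : ℕ) = 1) (hp : (τ i₀ * τ i₁) ^ 4 = 1)
    (hprim : IsPreprimitive (closure (Set.range τ)) α) :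
    ∃ e ∈ closure (Set.range τ), e.IsSwap := by
  have hk3 : 3 < k := by
    have := Nat.even_iff.1 heven
    omega
  obtain ⟨e, he, hee, he1, hex, hxe, hye⟩ := exists_commuting_involution (h.sq i₀) (h.sq i₁)
    (h.ne_one i₁) (fun h01 => by have := congrArg Fin.val (h.injective h01); omega)
    (by rwa [← pow_add])
  have hxD := h.commute_closure_oddTail (h₀.trans_le zero_le_one)
  have hyD := h.commute_closure_oddTail h₁.le
  have heD : ∀ s ∈ τ '' oddTail k, Commute e s := fun s hs => by
    refine (commute_of_mem_closure ?_ e he).symm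
    rintro _ (rfl | rfl)
    exacts [(hxD s (subset_closure hs)).symm, (hyD s (subset_closure hs)).symm]
  have hE := h.isElementaryTwo_closure_insert_insert_oddTail h₀ hee hxe heD
  have hcard := (h.two_pow_le_sixteen_mul_sq_card_oddTail heven hm.le hk).trans <|
    (by ring : 16 * Nat.card (closure (τ '' oddTail k)) ^ 2 =
      (4 * Nat.card (closure (τ '' oddTail k))) ^ 2).trans_le <|
    Nat.pow_le_pow_left (h.four_mul_card_le_card_closure_insert h₀ h₁ he hee he1 hex heD) 2
  have hV : ∀ v ∈ Set.range τ, Nat.card (closure (insert (τ i₀) (insert e (τ '' oddTail k)))) ≤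
      4 * Nat.card (closure (insert (τ i₀) (insert e (τ '' oddTail k))) ⊓ centralizer {v} :
        Subgroup (Perm α)) := by
    rintro _ ⟨j, rfl⟩
    exact (card_le_two_pow_ncard_mul_card_inf_centralizer (fun s hs => hE s (subset_closure hs))
      (fun s hs t ht => hE.commute (subset_closure hs) (subset_closure ht)) (τ j)).trans
      (Nat.mul_le_mul_right _ (Nat.pow_le_pow_right two_pos
        (h.ncard_not_commute_insert_le h₀ h₁ hk3 he hxe hye j)))
  obtain ⟨f, hf, hswap⟩ :=
    hE.exists_isSwap_of_isPreprimitive hm hcard (Set.forall_mem_range.2 h.sq) hV hprim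
  exact ⟨f, closure_insert_insert_image_le he hf, hswap⟩

end IsIndepString

section Maximality

theorem apply_mem_setOf_apply_ne_of_semiconjBy_inv {α : Type*} {t x : Perm α}
    (h : SemiconjBy x t t⁻¹) {s : α} (hs : t s ≠ s) : t (x s) ≠ x s := fun hfix =>
  have hxts : x (t s) = t⁻¹ (x s) := DFunLike.congr_fun h.eq s
  hs (x.injective (hxts.trans (Perm.inv_eq_iff_eq.2 hfix.symm)))

namespace IsIndepString

variable {α : Type*} [Finite α] {k : ℕ} {τ : Fin k → Perm α}

theorem card_closure_oddTail_le (h : IsIndepString τ) {j : Fin k} (hj : (j : ℕ) = 2) (hk : 3 < k) :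
    Nat.card (closure (τ '' oddTail k)) ≤
      2 * Nat.card (closure (τ '' oddTail k) ⊓ centralizer {τ j} : Subgroup (Perm α)) := by
  have hsub : {s ∈ τ '' oddTail k | ¬ Commute (τ j) s} ⊆ {τ ⟨3, hk⟩} := by
    rintro _ ⟨⟨i, hi, rfl⟩, hij⟩
    refine congrArg τ (Fin.ext ?_)
    by_contra hi3
    have := hi.2
    dsimp only at hi3
    exact hij (h.comm j i (by omega))
  have hone := (Set.ncard_le_ncard hsub).trans_eq (Set.ncard_singleton _)
  exact (card_le_two_pow_ncard_mul_card_inf_centralizer h.mul_self_of_mem_image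
    (h.commute_of_mem_image fun _ hi _ hj => add_one_ne_of_mem_oddTail hi hj) (τ j)).trans
    (Nat.mul_le_mul_right _ (Nat.pow_le_pow_right two_pos hone))

theorem apply_mem_orbitTriple_oddTail [DecidableEq α] (h : IsIndepString τ) {i₀ i₁ : Fin k}
    (h₀ : (i₀ : ℕ) = 0) (h₁ : (i₁ : ℕ) = 1) (hk : 3 < k)
    (hswap : ∀ e ∈ closure (τ '' oddTail k), ¬ e.IsSwap)
    (hcard : 2 ^ Nat.card α ≤ 16 * Nat.card (closure (τ '' oddTail k)) ^ 2) {ω : α}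
    (hω : ((τ i₀ * τ i₁) ^ 4) ω ≠ ω) (htwo : (orbit (closure (τ '' oddTail k)) ω).ncard = 2)
    (j : Fin k) {s : α} (hs : s ∈ orbitTriple (closure (τ '' oddTail k)) (τ i₀ * τ i₁) ω) :
    τ j s ∈ orbitTriple (closure (τ '' oddTail k)) (τ i₀ * τ i₁) ω := by
  have hD := h.isElementaryTwo_oddTail
  have hv : ∀ e ∈ closure (τ '' oddTail k), Commute (τ i₀ * τ i₁) e := fun e he =>
    (h.commute_closure_oddTail (h₀.trans_le zero_le_one) e he).mul_left
      (h.commute_closure_oddTail h₁.le e he)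
  by_cases hj : (j : ℕ) = 2
  · exact hD.apply_mem_orbitTriple hswap hv hcard (hD.apply_apply_notMem_orbit hv hω) htwo
      (h.card_closure_oddTail_le hj hk) hs
  rw [← hD.setOf_pow_four_apply_ne hswap hv hcard hω htwo] at hs ⊢
  have hinv {x : Perm α} (hx : SemiconjBy x (τ i₀ * τ i₁) (τ i₀ * τ i₁)⁻¹) :
      ((τ i₀ * τ i₁) ^ 4) (x s) ≠ x s :=
    apply_mem_setOf_apply_ne_of_semiconjBy_inv (by simpa only [inv_pow] using hx.pow_right 4) hs
  obtain hj | hj | hj : j = i₀ ∨ j = i₁ ∨ 3 ≤ (j : ℕ) := by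
    rw [Fin.ext_iff, Fin.ext_iff]
    omega
  · exact hj ▸ hinv (semiconjBy_left_mul_inv (h.sq i₀) (h.sq i₁))
  · exact hj ▸ hinv (semiconjBy_right_mul_inv (h.sq i₀) (h.sq i₁))
  · have hcomm : Commute ((τ i₀ * τ i₁) ^ 4) (τ j) :=
      ((h.comm i₀ j (by omega)).mul_left (h.comm i₁ j (by omega))).pow_left 4
    rw [Set.mem_ofPred_eq, apply_apply_comm hcomm]
    exact (τ j).injective.ne hs

-- A point moved by the fourth power and its translates have orbits of size 2 under the odd tail;
-- without transpositions these six points would be preserved by the whole string.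
theorem exists_isSwap_of_pow_four_ne_one [DecidableEq α] (h : IsIndepString τ)
    (heven : Even (Nat.card α)) (hm : 6 < Nat.card α) (hk : Nat.card α ≤ k + 2) {i₀ i₁ : Fin k}
    (h₀ : (i₀ : ℕ) = 0) (h₁ : (i₁ : ℕ) = 1) (hp : (τ i₀ * τ i₁) ^ 4 ≠ 1)
    (htrans : IsPretransitive (closure (Set.range τ)) α) :
    ∃ e ∈ closure (Set.range τ), e.IsSwap := by
  have hle : closure (τ '' oddTail k) ≤ closure (Set.range τ) :=
    closure_mono (Set.image_subset_range _ _)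
  by_contra! hswap
  obtain ⟨ω, hω⟩ : ∃ ω, ((τ i₀ * τ i₁) ^ 4) ω ≠ ω := by
    by_contra! hfix
    exact hp (Perm.ext hfix)
  have hD := h.isElementaryTwo_oddTail
  have hxD := h.commute_closure_oddTail (h₀.trans_le zero_le_one)
  have hyD := h.commute_closure_oddTail h₁.le
  have hv : ∀ e ∈ closure (τ '' oddTail k), Commute (τ i₀ * τ i₁) e := fun e he =>
    (hxD e he).mul_left (hyD e he)
  have hcard := h.two_pow_le_sixteen_mul_sq_card_oddTail heven (by omega) hk
  have hvω := hD.apply_apply_notMem_orbit hv hω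
  rcases hD.ncard_orbit_eq_one_or_two hv hvω hcard with hone | htwo
  · obtain ⟨f, hf, hxf | hyf⟩ := hD.exists_isSwap_of_mem_fixedPoints heven hcard (h.sq i₀)
      (h.sq i₁) hxD hyD (mem_fixedPoints_of_ncard_orbit_eq_one hone)
      fun hfix => hvω (by rw [hfix]; exact mem_orbit_self ω)
    exacts [hswap _ (mul_mem (subset_closure ⟨i₀, rfl⟩) (hle hf)) hxf,
      hswap _ (mul_mem (subset_closure ⟨i₁, rfl⟩) (hle hf)) hyf]
  · have huniv := eq_univ_of_mapsTo htrans ⟨ω, Or.inl (Or.inl (mem_orbit_self ω))⟩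
      (Set.forall_mem_range.2 fun j => apply_mem_iff_of_mul_self (h.sq j) fun s hs =>
        h.apply_mem_orbitTriple_oddTail h₀ h₁ (by omega) (fun e he => hswap e (hle he)) hcard hω
          htwo j hs)
    have hsix := ncard_orbitTriple hv hvω
    rw [huniv, Set.ncard_univ, htwo] at hsix
    omega

theorem exists_isSwap_of_even [DecidableEq α] (h : IsIndepString τ) (heven : Even (Nat.card α))
    (hm : 6 < Nat.card α) (hk : Nat.card α ≤ k + 2)
    (hprim : IsPreprimitive (closure (Set.range τ)) α) :
    ∃ e ∈ closure (Set.range τ), e.IsSwap := by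
  by_cases hp : (τ ⟨0, by omega⟩ * τ ⟨1, by omega⟩) ^ 4 = 1
  · exact h.exists_isSwap_of_pow_four_eq_one heven (by omega) hk rfl rfl hp hprim
  · exact h.exists_isSwap_of_pow_four_ne_one heven hm hk rfl rfl hp hprim.toIsPretransitive

theorem closure_range_eq_top (h : IsIndepString τ) (hm : 6 < Nat.card α) (hk : Nat.card α ≤ k + 2)
    (hprim : IsPreprimitive (closure (Set.range τ)) α) : closure (Set.range τ) = ⊤ := by
  classical
  obtain ⟨e, he, hswap⟩ : ∃ e ∈ closure (Set.range τ), e.IsSwap := by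
    rcases Nat.even_or_odd (Nat.card α) with heven | hodd
    · exact h.exists_isSwap_of_even heven hm hk hprim
    · exact h.exists_isSwap_of_odd (by omega) hk hodd hprim.toIsPretransitive
  exact Perm.subgroup_eq_top_of_isPreprimitive_of_isSwap_mem hprim e hswap he

end IsIndepString

end Maximality

/-! ### Flips of two-point fibers -/

section FlipFamily

variable {Y : Type*} [DecidableEq Y]

/-- A family of subsets closed under symmetric differences and permutations of the points. With
symmetric difference as addition this is a `Perm Y`-submodule of the permutation module of `Y`
over the field with two elements. -/
structure IsFlipFamily (𝒦 : Set (Finset Y)) : Prop where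
  symmDiff_mem : ∀ A ∈ 𝒦, ∀ B ∈ 𝒦, A ∆ B ∈ 𝒦
  map_mem : ∀ A ∈ 𝒦, ∀ p : Perm Y, A.map p.toEmbedding ∈ 𝒦

theorem symmDiff_map_swap {A : Finset Y} {x y : Y} (hx : x ∈ A) (hy : y ∉ A) :
    A ∆ A.map (swap x y).toEmbedding = {x, y} := by
  ext z
  rw [Finset.mem_symmDiff, Finset.mem_map_equiv, symm_swap, Finset.mem_insert,
    Finset.mem_singleton]
  by_cases hzx : z = x
  · subst hzx; simp [hx, hy]
  · by_cases hzy : z = y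
    · subst hzy; simp [hx, hy]
    · rw [swap_apply_of_ne_of_ne hzx hzy]
      simp [hzx, hzy]

theorem even_card_symmDiff_iff {A B : Finset Y} :
    Even (A ∆ B).card ↔ (Even A.card ↔ Even B.card) := by
  have hA := Finset.card_sdiff_add_card_inter A B
  have hB := Finset.card_sdiff_add_card_inter B A
  rw [Finset.inter_comm B A] at hB
  have hcard : (A ∆ B).card = (A \ B).card + (B \ A).card :=
    Finset.card_union_of_disjoint disjoint_sdiff_sdiff
  simp only [Nat.even_iff]
  omega

namespace IsFlipFamily

variable {𝒦 : Set (Finset Y)} {A B : Finset Y}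

theorem pair_mem (h : IsFlipFamily 𝒦) (hA : A ∈ 𝒦) {x y : Y} (hx : x ∈ A) (hy : y ∉ A)
    {u v : Y} (huv : u ≠ v) : {u, v} ∈ 𝒦 := by
  have hxy : x ≠ y := fun e => hy (e ▸ hx)
  have hpair := h.symmDiff_mem _ hA _ (h.map_mem _ hA (swap x y))
  rw [symmDiff_map_swap hx hy] at hpair
  have hu : u ≠ swap x u y := fun e => hxy ((swap x u).injective (by rw [swap_apply_left, ← e]))
  convert h.map_mem _ (h.map_mem _ hpair (swap x u)) (swap (swap x u y) v) using 1
  simp [swap_apply_of_ne_of_ne hu huv]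

variable [Fintype Y]

theorem even_mem (h : IsFlipFamily 𝒦) (hA : A ∈ 𝒦) (hne : A ≠ ∅) (huniv : A ≠ Finset.univ)
    (hB : Even B.card) : B ∈ 𝒦 := by
  obtain ⟨x, hx⟩ := Finset.nonempty_iff_ne_empty.2 hne
  obtain ⟨y, hy⟩ : ∃ y, y ∉ A := by simpa [Finset.eq_univ_iff_forall] using huniv
  induction hn : B.card using Nat.strong_induction_on generalizing B with
  | _ n ih =>
    rcases B.eq_empty_or_nonempty with rfl | hBne
    · simpa using h.symmDiff_mem _ hA _ hA
    · have hcard : 1 < B.card := by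
        have := hBne.card_pos
        rw [Nat.even_iff] at hB
        omega
      obtain ⟨u, hu, v, hv, huv⟩ := Finset.one_lt_card.1 hcard
      have hsub : {u, v} ⊆ B := Finset.insert_subset hu (Finset.singleton_subset_iff.2 hv)
      have hsdiff : (B \ {u, v}).card = B.card - 2 := by
        rw [Finset.card_sdiff_of_subset hsub, Finset.card_pair huv]
      have hmem := ih _ (by omega) (hsdiff ▸ (Nat.even_sub hcard).2 (by simp [hB])) hsdiff
      have hunion := h.symmDiff_mem _ hmem _ (h.pair_mem hA hx hy huv)
      rwa [disjoint_sdiff_self_left.symmDiff_eq_sup, Finset.sup_eq_union,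
        Finset.sdiff_union_of_subset hsub] at hunion

theorem mem_of_odd_mem (h : IsFlipFamily 𝒦) (hA : A ∈ 𝒦) (hne : A ≠ ∅)
    (huniv : A ≠ Finset.univ) {O : Finset Y} (hO : O ∈ 𝒦) (hodd : Odd O.card) (B : Finset Y) :
    B ∈ 𝒦 := by
  rcases Nat.even_or_odd B.card with hB | hB
  · exact h.even_mem hA hne huniv hB
  · rw [← Nat.not_even_iff_odd] at hB hodd
    have hBO : B ∆ O ∈ 𝒦 :=
      h.even_mem hA hne huniv (even_card_symmDiff_iff.2 (iff_of_false hB hodd))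
    simpa using h.symmDiff_mem _ hBO _ hO

end IsFlipFamily

end FlipFamily

section Flip

variable {X Y : Type*}

/-- `ι` exchanges the two points of each fiber of `b`. -/
structure IsFlip (b : X → Y) (ι : Perm X) : Prop where
  apply_ne : ∀ x, ι x ≠ x
  map_apply : ∀ x, b (ι x) = b x
  eq_or_eq : ∀ x y, b y = b x → y = x ∨ y = ι x

variable {b : X → Y} {ι σ : Perm X} {p : Perm Y} {A B : Finset Y}

theorem exists_isFlip (hfib : ∀ c : Y, {x | b x = c}.ncard = 2) : ∃ ι : Perm X, IsFlip b ι := by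
  have hpartner : ∀ x, ∃ y, y ≠ x ∧ b y = b x ∧ ∀ z, b z = b x → z = x ∨ z = y := by
    intro x
    obtain ⟨u, v, huv, hpair⟩ := Set.ncard_eq_two.1 (hfib (b x))
    have hmem : ∀ z, b z = b x ↔ z = u ∨ z = v := Set.ext_iff.1 hpair
    rcases (hmem x).1 rfl with rfl | rfl
    · exact ⟨v, huv.symm, (hmem v).2 (Or.inr rfl), fun z hz => (hmem z).1 hz⟩
    · exact ⟨u, huv, (hmem u).2 (Or.inl rfl), fun z hz => ((hmem z).1 hz).symm⟩
  choose f hne hmap hor using hpartner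
  have hinv : Function.Involutive f := fun x =>
    (hor x (f (f x)) (by rw [hmap, hmap])).resolve_right (hne _)
  exact ⟨hinv.toPerm, hne, hmap, hor⟩

namespace IsFlip

theorem apply_apply (h : IsFlip b ι) (x : X) : ι (ι x) = x :=
  (h.eq_or_eq x (ι (ι x)) (by rw [h.map_apply, h.map_apply])).resolve_right (h.apply_ne _)

theorem mul_self (h : IsFlip b ι) : ι * ι = 1 := Equiv.ext h.apply_apply

theorem commute_of_semiconj (h : IsFlip b ι) (hσ : Function.Semiconj b σ p) : Commute ι σ :=
  Equiv.ext fun x => ((h.eq_or_eq (σ x) (σ (ι x)) (by rw [hσ, hσ, h.map_apply])).resolve_left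
    fun e => h.apply_ne x (σ.injective e)).symm

variable [DecidableEq Y]

/-- The permutation exchanging the two points of each fiber over a point of `A`. -/
def flipOn (h : IsFlip b ι) (A : Finset Y) : Perm X :=
  Function.Involutive.toPerm (fun x => if b x ∈ A then ι x else x) (by
    intro x
    by_cases hx : b x ∈ A <;> simp [hx, h.map_apply, h.apply_apply])

theorem flipOn_apply (h : IsFlip b ι) (A : Finset Y) (x : X) :
    h.flipOn A x = if b x ∈ A then ι x else x := rfl

theorem flipOn_empty (h : IsFlip b ι) : h.flipOn ∅ = 1 := by
  ext x
  simp [flipOn_apply]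

theorem flipOn_univ [Fintype Y] (h : IsFlip b ι) : h.flipOn Finset.univ = ι := by
  ext x
  simp [flipOn_apply]

theorem flipOn_mul_flipOn (h : IsFlip b ι) (A B : Finset Y) :
    h.flipOn A * h.flipOn B = h.flipOn (A ∆ B) := by
  ext x
  simp only [Perm.mul_apply, flipOn_apply, Finset.mem_symmDiff]
  by_cases hA : b x ∈ A <;> by_cases hB : b x ∈ B <;> simp [hA, hB, h.apply_apply, h.map_apply]

theorem conj_flipOn (h : IsFlip b ι) (hσ : Function.Semiconj b σ p) (A : Finset Y) :
    σ * h.flipOn A * σ⁻¹ = h.flipOn (A.map p.toEmbedding) := by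
  rw [mul_inv_eq_iff_eq_mul]
  ext x
  have hmem : b (σ x) ∈ A.map p.toEmbedding ↔ b x ∈ A := by
    rw [hσ, Finset.mem_map_equiv, Equiv.symm_apply_apply]
  simp only [Perm.mul_apply, flipOn_apply, hmem]
  split_ifs
  · exact (apply_apply_comm (h.commute_of_semiconj hσ) x).symm
  · rfl

theorem flipOn_injective (h : IsFlip b ι) (hb : Function.Surjective b) :
    Function.Injective h.flipOn := by
  intro A B hAB
  ext y
  obtain ⟨x, rfl⟩ := hb y
  have hmoved : ∀ A : Finset Y, h.flipOn A x = ι x ↔ b x ∈ A := fun A => by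
    rw [flipOn_apply]
    split_ifs with hA
    exacts [iff_of_true rfl hA, iff_of_false (h.apply_ne x).symm hA]
  rw [← hmoved, ← hmoved, hAB]

theorem exists_eq_flipOn [Finite Y] (h : IsFlip b ι) (hσ : Function.Semiconj b σ id) :
    ∃ A, σ = h.flipOn A := by
  classical
  have := Fintype.ofFinite Y
  refine ⟨Finset.univ.filter fun y => ∃ x, b x = y ∧ σ x ≠ x, ?_⟩
  ext x
  rw [flipOn_apply]
  simp only [Finset.mem_filter, Finset.mem_univ, true_and]
  split_ifs with hmoved
  · obtain ⟨z, hz, hne⟩ := hmoved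
    have hσz : σ z = ι z := (h.eq_or_eq z (σ z) (hσ z)).resolve_left hne
    rcases h.eq_or_eq z x hz.symm with rfl | rfl
    · exact hσz
    · rw [← apply_apply_comm (h.commute_of_semiconj (p := 1) hσ), hσz]
  · by_contra hne
    exact hmoved ⟨x, rfl, hne⟩

end IsFlip

end Flip

section CommutingFactors

variable {Y : Type*} {A B : Subgroup (Perm Y)}

theorem eq_one_of_mem_centralizer_of_isPretransitive (htrans : IsPretransitive A Y) {c : Perm Y}
    (hc : c ∈ centralizer A) {x : Y} (hx : c x = x) : c = 1 := by
  ext y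
  obtain ⟨a, rfl⟩ := exists_smul_eq A x y
  exact apply_eq_self_of_commute (mem_centralizer_iff.1 hc a a.2) hx

theorem normal_of_le_centralizer_of_sup_eq_top {G : Type*} [Group G] {H K : Subgroup G}
    (hK : K ≤ centralizer H) (htop : H ⊔ K = ⊤) : H.Normal :=
  normalizer_eq_top_iff.1 <| eq_top_iff.2 <|
    htop.ge.trans (sup_le le_normalizer (hK.trans (centralizer_le_normalizer _)))

theorem isPretransitive_of_normal_of_ne_bot (hA : A.Normal) (hbot : A ≠ ⊥) :
    IsPretransitive A Y := by
  refine IsQuasiPreprimitive.isPretransitive_of_normal fun hfix => hbot ?_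
  refine (eq_bot_iff_forall A).2 fun a ha => Equiv.ext fun y => ?_
  exact (Set.eq_univ_iff_forall.1 hfix y) ⟨a, ha⟩

theorem eq_bot_or_eq_bot_of_le_centralizer [Finite Y] (hY : 2 < Nat.card Y)
    (hB : B ≤ centralizer A) (htop : A ⊔ B = ⊤) : A = ⊥ ∨ B = ⊥ := by
  classical
  have hA : A ≤ centralizer B := le_centralizer_iff.1 hB
  have hAnormal := normal_of_le_centralizer_of_sup_eq_top hB htop
  have hBnormal := normal_of_le_centralizer_of_sup_eq_top hA (sup_comm A B ▸ htop)
  by_contra! hbot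
  have hAtrans := isPretransitive_of_normal_of_ne_bot hAnormal hbot.1
  have hBtrans := isPretransitive_of_normal_of_ne_bot hBnormal hbot.2
  have hY' : 3 ≤ Cardinal.mk Y := by
    rw [← Nat.cast_card]
    exact_mod_cast hY
  have : Nontrivial Y := Finite.one_lt_card_iff_nontrivial.1 (by omega)
  obtain ⟨x, y, hxy⟩ := exists_pair_ne Y
  obtain ⟨z, hzx, hzy⟩ := Cardinal.exists_ne_ne_of_three_le hY' x y
  obtain ⟨a, ha, c, hc, hac⟩ := mem_sup_of_normal_left.1 (htop.ge (mem_top (swap x y)))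
  have hne : swap x y ≠ 1 := fun e => hxy (swap_eq_one_iff.1 e)
  have hz : swap x y z = z := swap_apply_of_ne_of_ne hzx hzy
  have hcomm : Commute a c := mem_centralizer_iff.1 (hB hc) a ha
  have hcswap : Commute c (swap x y) := hac ▸ hcomm.symm.mul_right (Commute.refl c)
  by_cases hcx : c x = x
  · have hc1 := eq_one_of_mem_centralizer_of_isPretransitive hAtrans (hB hc) hcx
    rw [hc1, mul_one] at hac
    exact hne (hac ▸ eq_one_of_mem_centralizer_of_isPretransitive hBtrans (hA ha) (hac ▸ hz))
  · have hcy : c x = y := by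
      refine (eq_or_eq_of_swap_apply_ne_self fun e => ?_).resolve_left hcx
      rw [← apply_apply_comm hcswap, swap_apply_left] at e
      exact hxy (c.injective e).symm
    have hay : a y = y := by rw [← hcy, ← Perm.mul_apply, hac, swap_apply_left, hcy]
    have ha1 := eq_one_of_mem_centralizer_of_isPretransitive hBtrans (hA ha) hay
    rw [ha1, one_mul] at hac
    exact hne (hac ▸ eq_one_of_mem_centralizer_of_isPretransitive hAtrans (hB hc) (hac ▸ hz))

theorem center_perm_eq_bot [Finite Y] (hY : 2 < Nat.card Y) : center (Perm Y) = ⊥ := by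
  refine (eq_bot_or_eq_bot_of_le_centralizer hY (A := ⊤) ?_ (top_sup_eq _)).resolve_left ?_
  · exact centralizer_univ.ge
  · have : Nontrivial Y := Finite.one_lt_card_iff_nontrivial.1 (by omega)
    exact top_ne_bot

end CommutingFactors

section Semiconj

variable {X Y I : Type*} {b : X → Y} {σ σ' : Perm X} {p p' : Perm Y}

/-- The pairs of permutations of `X` and `Y` that correspond to each other under `b`. -/
def semiconjSubgroup (b : X → Y) : Subgroup (Perm X × Perm Y) where
  carrier := {q | Function.Semiconj b q.1 q.2}
  one_mem' := Function.Semiconj.id_right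
  mul_mem' := Function.Semiconj.comp_right
  inv_mem' := fun {q} hq => hq.inverses_right q.1.apply_symm_apply q.2.symm_apply_apply

theorem semiconj_mul (h : Function.Semiconj b σ p) (h' : Function.Semiconj b σ' p') :
    Function.Semiconj b (σ * σ' : Perm X) (p * p' : Perm Y) :=
  (semiconjSubgroup b).mul_mem (x := (σ, p)) (y := (σ', p')) h h'

theorem semiconj_inv (h : Function.Semiconj b σ p) :
    Function.Semiconj b (σ⁻¹ : Perm X) (p⁻¹ : Perm Y) :=
  (semiconjSubgroup b).inv_mem (x := (σ, p)) h

theorem semiconj_pow (h : Function.Semiconj b σ p) (k : ℕ) :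
    Function.Semiconj b (σ ^ k : Perm X) (p ^ k : Perm Y) :=
  (semiconjSubgroup b).pow_mem (x := (σ, p)) h k

theorem eq_of_semiconj_of_surjective (hb : Function.Surjective b) (h : Function.Semiconj b σ p)
    (h' : Function.Semiconj b σ p') : p = p' := by
  ext y
  obtain ⟨x, rfl⟩ := hb y
  rw [← h, h']

theorem commute_of_semiconj (hb : Function.Surjective b) (h : Function.Semiconj b σ p)
    (h' : Function.Semiconj b σ' p') (hσ : Commute σ σ') : Commute p p' :=
  eq_of_semiconj_of_surjective hb (semiconj_mul h h') (hσ.eq ▸ semiconj_mul h' h)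

theorem mul_self_of_semiconj (hb : Function.Surjective b) (h : Function.Semiconj b σ p)
    (hσ : σ * σ = 1) : p * p = 1 :=
  eq_of_semiconj_of_surjective hb (hσ ▸ semiconj_mul h h) Function.Semiconj.id_right

theorem exists_semiconj_of_forall_apply_eq [Finite Y] (hb : Function.Surjective b)
    (hσ : ∀ x y, b x = b y → b (σ x) = b (σ y)) : ∃ p : Perm Y, Function.Semiconj b σ p := by
  have hlift : ∀ x, b (σ (Function.surjInv hb (b x))) = b (σ x) := fun x =>
    hσ _ _ (Function.surjInv_eq hb _)
  have hsurj : Function.Surjective (b ∘ σ ∘ Function.surjInv hb) := by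
    intro y
    obtain ⟨x, rfl⟩ := hb y
    exact ⟨b (σ⁻¹ x), (hlift _).trans (by rw [Perm.inv_def, apply_symm_apply])⟩
  exact ⟨Equiv.ofBijective _ (Finite.surjective_iff_bijective.1 hsurj), fun x => (hlift x).symm⟩

variable {ρ : I → Perm X} {π : I → Perm Y} {J : Set I}

theorem closure_prod_le_semiconjSubgroup (hρ : ∀ i, Function.Semiconj b (ρ i) (π i)) (J : Set I) :
    closure ((fun i => (ρ i, π i)) '' J) ≤ semiconjSubgroup b :=
  (closure_le _).2 (Set.image_subset_iff.2 fun i _ => hρ i)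

theorem map_fst_closure (ρ : I → Perm X) (π : I → Perm Y) (J : Set I) :
    (closure ((fun i => (ρ i, π i)) '' J)).map (MonoidHom.fst _ _) = closure (ρ '' J) := by
  rw [MonoidHom.map_closure, Set.image_image]
  rfl

theorem map_snd_closure (ρ : I → Perm X) (π : I → Perm Y) (J : Set I) :
    (closure ((fun i => (ρ i, π i)) '' J)).map (MonoidHom.snd _ _) = closure (π '' J) := by
  rw [MonoidHom.map_closure, Set.image_image]
  rfl

theorem exists_mem_closure_semiconj (hρ : ∀ i, Function.Semiconj b (ρ i) (π i))
    (hσ : σ ∈ closure (ρ '' J)) : ∃ p ∈ closure (π '' J), Function.Semiconj b σ p := by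
  rw [← map_fst_closure ρ π] at hσ
  obtain ⟨⟨σ, p⟩, hσp, rfl⟩ := hσ
  exact ⟨p, map_snd_closure ρ π J ▸ mem_map_of_mem (MonoidHom.snd _ _) hσp,
    closure_prod_le_semiconjSubgroup hρ J hσp⟩

theorem exists_semiconj_mem_closure (hρ : ∀ i, Function.Semiconj b (ρ i) (π i))
    (hp : p ∈ closure (π '' J)) : ∃ σ ∈ closure (ρ '' J), Function.Semiconj b σ p := by
  rw [← map_snd_closure ρ π] at hp
  obtain ⟨⟨σ, p⟩, hσp, rfl⟩ := hp
  exact ⟨σ, map_fst_closure ρ π J ▸ mem_map_of_mem (MonoidHom.fst _ _) hσp,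
    closure_prod_le_semiconjSubgroup hρ J hσp⟩

end Semiconj

/-! ### Generators permuting the fibers -/

/-- Generators `ρ` with the intersection property that permute the fibers of `b` as `π`, where
`ι` exchanges the two points of each fiber and `π '' L` generates the symmetric group. -/
structure FlipSystem {X Y I : Type*} (ρ : I → Perm X) (b : X → Y) (ι : Perm X) (π : I → Perm Y)
    (L : Set I) : Prop where
  flip : IsFlip b ι
  surjective : Function.Surjective b
  semiconj : ∀ i, Function.Semiconj b (ρ i) (π i)
  ne_one : ∀ i, ρ i ≠ 1
  inf_closure : ∀ J K : Set I, closure (ρ '' J) ⊓ closure (ρ '' K) = closure (ρ '' (J ∩ K))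
  closure_eq_top : closure (π '' L) = ⊤

theorem mem_closure_image_insert_of_mul_mem {G I : Type*} [Group G] {ρ : I → G} {J : Set I}
    {i : I} {g : G} (h : g * ρ i ∈ closure (ρ '' J)) : g ∈ closure (ρ '' insert i J) :=
  (mul_mem_cancel_right (Subgroup.subset_closure (Set.mem_image_of_mem ρ (Or.inl rfl)))).1
    (closure_mono (Set.image_mono (Set.subset_insert i J)) h)

namespace FlipSystem

variable {X Y I : Type*} {ρ : I → Perm X} {b : X → Y} {ι : Perm X} {π : I → Perm Y} {L : Set I}
  {i j : I} {σ : Perm X} {p : Perm Y}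

theorem exists_semiconj_mem (h : FlipSystem ρ b ι π L) (p : Perm Y) :
    ∃ g ∈ closure (ρ '' L), Function.Semiconj b g p :=
  exists_semiconj_mem_closure h.semiconj (h.closure_eq_top ▸ mem_top p)

theorem notMem_closure (h : FlipSystem ρ b ι π L) {J : Set I} (hi : i ∉ J) :
    ρ i ∉ closure (ρ '' J) := by
  intro hmem
  have hinf : ρ i ∈ closure (ρ '' {i}) ⊓ closure (ρ '' J) := ⟨subset_closure ⟨i, rfl, rfl⟩, hmem⟩
  rw [h.inf_closure, Set.singleton_inter_eq_empty.2 hi, Set.image_empty, Subgroup.closure_empty,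
    mem_bot] at hinf
  exact h.ne_one i hinf

theorem notMem_closure_of_mul_mem (h : FlipSystem ρ b ι π L) (hi : i ∉ L)
    (hσ : σ * ρ i ∈ closure (ρ '' L)) : σ ∉ closure (ρ '' L) :=
  fun hmem => h.notMem_closure hi ((mul_mem_cancel_left hmem).1 hσ)

theorem mem_closure_of_mem_insert (h : FlipSystem ρ b ι π L) (hij : i ≠ j) (hj : j ∉ L)
    (hσi : σ ∈ closure (ρ '' insert i L)) (hσj : σ ∈ closure (ρ '' insert j L)) :
    σ ∈ closure (ρ '' L) := by
  have hinter : insert i L ∩ insert j L = L := by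
    rw [Set.inter_insert_of_notMem (by simp [hij.symm, hj]),
      Set.inter_eq_right.2 (Set.subset_insert i L)]
  have hinf : σ ∈ closure (ρ '' insert i L) ⊓ closure (ρ '' insert j L) := ⟨hσi, hσj⟩
  rwa [h.inf_closure, hinter] at hinf

theorem eq_one_or_eq_flip_of_mem_centralizer [Finite Y] (h : FlipSystem ρ b ι π L)
    (hY : 2 < Nat.card Y) (hp : Function.Semiconj b σ p)
    (hσ : σ ∈ centralizer (closure (ρ '' L) : Set (Perm X))) :
    σ = 1 ∨ σ = ι := by
  classical
  have := Fintype.ofFinite Y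
  have hcenter : p ∈ center (Perm Y) := by
    refine mem_center_iff.2 fun q => ?_
    obtain ⟨g, hg, hgq⟩ := h.exists_semiconj_mem q
    exact commute_of_semiconj h.surjective hgq hp (hσ g hg)
  rw [center_perm_eq_bot hY, mem_bot] at hcenter
  obtain ⟨B, rfl⟩ := h.flip.exists_eq_flipOn (hcenter ▸ hp)
  have hinv : ∀ q : Perm Y, B.map q.toEmbedding = B := by
    intro q
    obtain ⟨g, hg, hgq⟩ := h.exists_semiconj_mem q
    apply h.flip.flipOn_injective h.surjective
    rw [← h.flip.conj_flipOn hgq, hσ g hg, mul_inv_cancel_right]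
  by_contra! hne
  obtain ⟨x, hx⟩ := Finset.nonempty_iff_ne_empty.2
    fun e : B = ∅ => hne.1 (e ▸ h.flip.flipOn_empty)
  obtain ⟨y, hy⟩ : ∃ y, y ∉ B := by
    simpa [Finset.eq_univ_iff_forall] using
      fun e : B = Finset.univ => hne.2 (e ▸ h.flip.flipOn_univ)
  exact hy (hinv (swap x y) ▸ Finset.mem_map.2 ⟨x, hx, swap_apply_left x y⟩)

variable [DecidableEq Y] {A B : Finset Y}

theorem isFlipFamily (h : FlipSystem ρ b ι π L) {J : Set I} (hJ : L ⊆ J) :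
    IsFlipFamily {A | h.flip.flipOn A ∈ closure (ρ '' J)} where
  symmDiff_mem A hA B hB := by
    rw [Set.mem_ofPred_eq] at *
    rw [← h.flip.flipOn_mul_flipOn]
    exact mul_mem hA hB
  map_mem A hA p := by
    rw [Set.mem_ofPred_eq] at *
    obtain ⟨g, hg, hgp⟩ := h.exists_semiconj_mem p
    have hgJ : g ∈ closure (ρ '' J) := closure_mono (Set.image_mono hJ) hg
    rw [← h.flip.conj_flipOn hgp]
    exact mul_mem (mul_mem hgJ hA) (inv_mem hgJ)

theorem ne_empty_of_flipOn_mul_mem (h : FlipSystem ρ b ι π L) (hi : i ∉ L)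
    (hA : h.flip.flipOn A * ρ i ∈ closure (ρ '' L)) : A ≠ ∅ := by
  rintro rfl
  exact h.notMem_closure_of_mul_mem hi hA (h.flip.flipOn_empty ▸ one_mem _)

theorem ne_of_flipOn_mul_mem (h : FlipSystem ρ b ι π L) (hij : i ≠ j) (hi : i ∉ L) (hj : j ∉ L)
    (hA : h.flip.flipOn A * ρ i ∈ closure (ρ '' L))
    (hB : h.flip.flipOn B * ρ j ∈ closure (ρ '' L)) : A ≠ B := by
  rintro rfl
  exact h.notMem_closure_of_mul_mem hi hA <| h.mem_closure_of_mem_insert hij hj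
    (mem_closure_image_insert_of_mul_mem hA) (mem_closure_image_insert_of_mul_mem hB)

theorem exists_flipOn_mul_mem [Finite Y] (h : FlipSystem ρ b ι π L) (hσ : Function.Semiconj b σ p) :
    ∃ A, h.flip.flipOn A * σ ∈ closure (ρ '' L) := by
  obtain ⟨g, hg, hgp⟩ := h.exists_semiconj_mem p
  have hgσ : Function.Semiconj b (g * σ⁻¹ : Perm X) id := by
    simpa using semiconj_mul hgp (semiconj_inv hσ)
  obtain ⟨A, hA⟩ := h.flip.exists_eq_flipOn hgσ
  exact ⟨A, by rwa [← hA, inv_mul_cancel_right]⟩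

theorem eq_univ_or_eq_univ_of_flipOn_mul_mem [Fintype Y] (h : FlipSystem ρ b ι π L) (hij : i ≠ j)
    (hi : i ∉ L) (hj : j ∉ L) (hA : h.flip.flipOn A * ρ i ∈ closure (ρ '' L))
    (hB : h.flip.flipOn B * ρ j ∈ closure (ρ '' L)) : A = Finset.univ ∨ B = Finset.univ := by
  by_contra! huniv
  have hAi := mem_closure_image_insert_of_mul_mem hA
  have hBj := mem_closure_image_insert_of_mul_mem hB
  have hodd : Odd A.card := by
    refine Nat.not_even_iff_odd.1 fun heven => h.notMem_closure_of_mul_mem hi hA ?_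
    exact h.mem_closure_of_mem_insert hij hj hAi <|
      (h.isFlipFamily (Set.subset_insert j L)).even_mem hBj
        (h.ne_empty_of_flipOn_mul_mem hj hB) huniv.2 heven
  refine h.notMem_closure_of_mul_mem hj hB (h.mem_closure_of_mem_insert hij hj ?_ hBj)
  exact (h.isFlipFamily (Set.subset_insert i L)).mem_of_odd_mem hAi
    (h.ne_empty_of_flipOn_mul_mem hi hA) huniv.1 hAi hodd B

end FlipSystem

/-- A flip system with exactly two labels `s` and `t` outside `L`: modulo the group generated by
the labels in `L`, the generator of `s` flips all fibers and that of `t` only those over `A`. -/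
structure SplitFlipSystem {X Y I : Type*} [Fintype Y] [DecidableEq Y] (ρ : I → Perm X)
    (b : X → Y) (ι : Perm X) (π : I → Perm Y) (L : Set I) (s t : I) (A : Finset Y) : Prop
    extends FlipSystem ρ b ι π L where
  ne : s ≠ t
  compl_eq : Lᶜ = {s, t}
  flip_mul_mem : ι * ρ s ∈ closure (ρ '' L)
  flipOn_mul_mem : toFlipSystem.flip.flipOn A * ρ t ∈ closure (ρ '' L)
  ne_univ : A ≠ Finset.univ

section SplitFlipSystem

variable {X Y I : Type*} [Fintype Y] [DecidableEq Y] {ρ : I → Perm X} {b : X → Y} {ι : Perm X}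
  {π : I → Perm Y} {L : Set I} {s t : I} {A : Finset Y}

theorem FlipSystem.exists_splitFlipSystem (h : FlipSystem ρ b ι π L) (hL : Lᶜ.ncard = 2) :
    ∃ s t A, SplitFlipSystem ρ b ι π L s t A := by
  obtain ⟨i, j, hij, hcompl⟩ := Set.ncard_eq_two.1 hL
  have hi : i ∉ L := hcompl.ge (Or.inl rfl)
  have hj : j ∉ L := hcompl.ge (Or.inr rfl)
  obtain ⟨A, hA⟩ := h.exists_flipOn_mul_mem (h.semiconj i)
  obtain ⟨B, hB⟩ := h.exists_flipOn_mul_mem (h.semiconj j)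
  have hAB := h.ne_of_flipOn_mul_mem hij hi hj hA hB
  rcases h.eq_univ_or_eq_univ_of_flipOn_mul_mem hij hi hj hA hB with rfl | rfl
  · exact ⟨i, j, B, h, hij, hcompl, h.flip.flipOn_univ ▸ hA, hB, hAB.symm⟩
  · exact ⟨j, i, A, h, hij.symm, hcompl.trans (Set.pair_comm i j), h.flip.flipOn_univ ▸ hB, hA,
      hAB⟩

namespace SplitFlipSystem

theorem left_notMem (h : SplitFlipSystem ρ b ι π L s t A) : s ∉ L := h.compl_eq.ge (Or.inl rfl)

theorem right_notMem (h : SplitFlipSystem ρ b ι π L s t A) : t ∉ L := h.compl_eq.ge (Or.inr rfl)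

theorem flip_notMem (h : SplitFlipSystem ρ b ι π L s t A) : ι ∉ closure (ρ '' L) :=
  h.notMem_closure_of_mul_mem h.left_notMem h.flip_mul_mem

theorem flip_notMem_insert (h : SplitFlipSystem ρ b ι π L s t A) :
    ι ∉ closure (ρ '' insert t L) := fun hmem =>
  h.flip_notMem <| h.mem_closure_of_mem_insert h.ne h.right_notMem
    (mem_closure_image_insert_of_mul_mem h.flip_mul_mem) hmem

theorem flipOn_mem_insert (h : SplitFlipSystem ρ b ι π L s t A) :
    h.flip.flipOn A ∈ closure (ρ '' insert t L) :=
  mem_closure_image_insert_of_mul_mem h.flipOn_mul_mem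

theorem ne_empty (h : SplitFlipSystem ρ b ι π L s t A) : A ≠ ∅ :=
  h.ne_empty_of_flipOn_mul_mem h.right_notMem h.flipOn_mul_mem

theorem even_card (h : SplitFlipSystem ρ b ι π L s t A) : Even A.card := by
  refine Nat.not_odd_iff_even.1 fun hodd => h.flip_notMem_insert ?_
  rw [← h.flip.flipOn_univ]
  exact (h.isFlipFamily (Set.subset_insert t L)).mem_of_odd_mem h.flipOn_mem_insert h.ne_empty
    h.ne_univ h.flipOn_mem_insert hodd Finset.univ

theorem odd_card (h : SplitFlipSystem ρ b ι π L s t A) : Odd (Nat.card Y) := by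
  refine Nat.not_even_iff_odd.1 fun heven => h.flip_notMem_insert ?_
  rw [Nat.card_eq_fintype_card] at heven
  rw [← h.flip.flipOn_univ]
  exact (h.isFlipFamily (Set.subset_insert t L)).even_mem h.flipOn_mem_insert h.ne_empty h.ne_univ
    heven

theorem eq_empty_of_flipOn_mem (h : SplitFlipSystem ρ b ι π L s t A) (B : Finset Y)
    (hB : h.flip.flipOn B ∈ closure (ρ '' L)) : B = ∅ := by
  by_contra hempty
  by_cases huniv : B = Finset.univ
  · rw [huniv, h.flip.flipOn_univ] at hB
    exact h.flip_notMem hB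
  · exact h.notMem_closure_of_mul_mem h.right_notMem h.flipOn_mul_mem
      ((h.isFlipFamily subset_rfl).even_mem hB hempty huniv h.even_card)

theorem flipOn_mem_closure_range (h : SplitFlipSystem ρ b ι π L s t A) (B : Finset Y) :
    h.flip.flipOn B ∈ closure (Set.range ρ) := by
  have hle : ∀ J, closure (ρ '' J) ≤ closure (ρ '' Set.univ) := fun J =>
    closure_mono (Set.image_mono (Set.subset_univ J))
  have huniv : h.flip.flipOn Finset.univ ∈ closure (ρ '' Set.univ) := by
    rw [h.flip.flipOn_univ]
    exact hle _ (mem_closure_image_insert_of_mul_mem h.flip_mul_mem)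
  rw [← Set.image_univ]
  exact (h.isFlipFamily (Set.subset_univ L)).mem_of_odd_mem (hle _ h.flipOn_mem_insert) h.ne_empty
    h.ne_univ huniv (by simpa [Nat.card_eq_fintype_card] using h.odd_card) B

theorem eq_of_semiconj (h : SplitFlipSystem ρ b ι π L s t A) {σ σ' : Perm X} {p : Perm Y}
    (hσ : σ ∈ closure (ρ '' L)) (hσ' : σ' ∈ closure (ρ '' L)) (hp : Function.Semiconj b σ p)
    (hp' : Function.Semiconj b σ' p) : σ = σ' := by
  have hid : Function.Semiconj b (σ * σ'⁻¹ : Perm X) id := by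
    simpa using semiconj_mul hp (semiconj_inv hp')
  obtain ⟨B, hB⟩ := h.flip.exists_eq_flipOn hid
  have hmem : σ * σ'⁻¹ ∈ closure (ρ '' L) := mul_mem hσ (inv_mem hσ')
  rw [h.eq_empty_of_flipOn_mem B (hB ▸ hmem), h.flip.flipOn_empty] at hB
  exact mul_inv_eq_one.1 hB

theorem nonempty_mulEquiv (h : SplitFlipSystem ρ b ι π L s t A) :
    Nonempty (closure (ρ '' L) ≃* Perm Y) := by
  choose f hfL hf using h.exists_semiconj_mem
  let F : Perm Y →* closure (ρ '' L) := MonoidHom.mk' (fun p => ⟨f p, hfL p⟩) fun p q =>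
    Subtype.ext <| h.eq_of_semiconj (hfL _) (mul_mem (hfL _) (hfL _)) (hf _)
      (semiconj_mul (hf p) (hf q))
  refine ⟨(MulEquiv.ofBijective F ⟨fun p q hpq => ?_, fun g => ?_⟩).symm⟩
  · have hfpq : f p = f q := congrArg Subtype.val hpq
    exact eq_of_semiconj_of_surjective h.surjective (hf p) (hfpq ▸ hf q)
  · obtain ⟨p, -, hp⟩ := exists_mem_closure_semiconj h.semiconj g.2
    exact ⟨p, Subtype.ext (h.eq_of_semiconj (hfL p) g.2 (hf p) hp)⟩

theorem coe_closure_range (h : SplitFlipSystem ρ b ι π L s t A) :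
    (closure (Set.range ρ) : Set (Perm X)) = {σ | ∀ x y, b x = b y → b (σ x) = b (σ y)} := by
  ext σ
  constructor
  · intro hσ x y hxy
    rw [← Set.image_univ] at hσ
    obtain ⟨p, -, hp⟩ := exists_mem_closure_semiconj h.semiconj hσ
    rw [hp, hp, hxy]
  · intro hσ
    obtain ⟨p, hp⟩ := exists_semiconj_of_forall_apply_eq h.surjective hσ
    obtain ⟨B, hB⟩ := h.exists_flipOn_mul_mem hp
    exact (mul_mem_cancel_left (h.flipOn_mem_closure_range B)).1
      (closure_mono (Set.image_subset_range _ _) hB)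

theorem not_forall_commute_right (h : SplitFlipSystem ρ b ι π L s t A) (hY : 2 < Nat.card Y) :
    ¬ ∀ l ∈ L, Commute (ρ t) (ρ l) := by
  intro hcomm
  have hcentral : ρ t ∈ centralizer (closure (ρ '' L) : Set (Perm X)) := by
    refine mem_centralizer_iff.2 fun g hg => ?_
    exact (commute_of_mem_closure (Set.forall_mem_image.2 hcomm) g hg).symm
  rcases h.eq_one_or_eq_flip_of_mem_centralizer hY (h.semiconj t) hcentral with hone | hflip
  · exact h.ne_one t hone
  · exact h.flip_notMem_insert (hflip ▸ subset_closure ⟨t, Or.inl rfl, rfl⟩)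

theorem setOf_not_commute_eq (h : SplitFlipSystem ρ b ι π L s t A) (hY : 2 < Nat.card Y)
    (hs : ∀ l ∈ L, Commute (ρ s) (ρ l)) :
    {i | i ∉ L ∧ ¬ ∀ l ∈ L, Commute (ρ i) (ρ l)} = {t} := by
  ext i
  have hi : i ∉ L ↔ i = s ∨ i = t := Set.ext_iff.1 h.compl_eq i
  rw [Set.mem_ofPred_eq, hi, Set.mem_singleton_iff]
  constructor
  · rintro ⟨rfl | rfl, hcomm⟩
    exacts [absurd hs hcomm, rfl]
  · rintro rfl
    exact ⟨Or.inr rfl, h.not_forall_commute_right hY⟩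

theorem setOf_commute_eq (h : SplitFlipSystem ρ b ι π L s t A) (hY : 2 < Nat.card Y)
    (hs : ∀ l ∈ L, Commute (ρ s) (ρ l)) :
    {i | i ∉ L ∧ ∀ l ∈ L, Commute (ρ i) (ρ l)} = {s} := by
  ext i
  have hi : i ∉ L ↔ i = s ∨ i = t := Set.ext_iff.1 h.compl_eq i
  rw [Set.mem_ofPred_eq, hi, Set.mem_singleton_iff]
  constructor
  · rintro ⟨rfl | rfl, hcomm⟩
    exacts [rfl, absurd hcomm (h.not_forall_commute_right hY)]
  · rintro rfl
    exact ⟨Or.inl rfl, hs⟩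

end SplitFlipSystem

end SplitFlipSystem

theorem isIndepString_comp_orderEmbedding {Y : Type*} {k r : ℕ} {π : Fin r → Perm Y}
    (hsq : ∀ i, π i * π i = 1) (hcomm : ∀ i j : Fin r, (i : ℕ) + 1 < j → Commute (π i) (π j))
    (e : Fin k ↪o Fin r)
    (hind : ∀ l ∈ Set.range e, π l ∉ closure (π '' (Set.range e \ {l}))) :
    IsIndepString (π ∘ e) where
  sq i := hsq (e i)
  comm i j hij := by
    have hlt : e i < e ⟨i + 1, by omega⟩ := e.strictMono (Fin.lt_def.2 (Nat.lt_succ_self i))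
    have hlt' : e ⟨i + 1, by omega⟩ < e j := e.strictMono (Fin.lt_def.2 hij)
    exact hcomm _ _ (by rw [Fin.lt_def] at hlt hlt'; omega)
  indep i hmem := by
    refine hind (e i) (Set.mem_range_self i) (closure_mono ?_ hmem)
    rw [Set.image_comp]
    refine Set.image_mono ?_
    rintro _ ⟨j, hj, rfl⟩
    exact ⟨Set.mem_range_self j, fun heq => hj (e.injective heq)⟩

theorem exists_isIndepString {Y : Type*} {r : ℕ} {π : Fin r → Perm Y} {L : Set (Fin r)}
    (hsq : ∀ i, π i * π i = 1) (hcomm : ∀ i j : Fin r, (i : ℕ) + 1 < j → Commute (π i) (π j))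
    (hind : ∀ l ∈ L, π l ∉ closure (π '' (L \ {l}))) :
    ∃ τ : Fin L.ncard → Perm Y, IsIndepString τ ∧ Set.range τ = π '' L := by
  classical
  let e := L.toFinset.orderEmbOfFin (Set.ncard_eq_toFinset_card' L).symm
  have hrange : Set.range e = L := by rw [Finset.range_orderEmbOfFin, Set.coe_toFinset]
  exact ⟨π ∘ e, isIndepString_comp_orderEmbedding hsq hcomm e (hrange.symm ▸ hind), by
    rw [Set.range_comp, hrange]⟩

theorem isPreprimitive_of_isBlock_fiber {M N X Y : Type*} [Group M] [Group N] [MulAction M X]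
    [MulAction N Y] {φ : M → N} {f : X →ₑ[φ] Y} (hf : Function.Surjective f)
    (htrans : IsPretransitive M X)
    (hmax : ∀ (c : Y) (Z : Set X), IsBlock M Z → {x | f x = c} ⊆ Z →
      Z = {x | f x = c} ∨ Z = Set.univ) : IsPreprimitive N Y where
  toIsPretransitive := htrans.of_surjective_map hf
  isTrivialBlock_of_isBlock {B} hB := by
    rcases B.eq_empty_or_nonempty with rfl | ⟨c, hc⟩
    · exact Or.inl Set.subsingleton_empty
    rw [IsTrivialBlock, ← Set.image_preimage_eq B hf]
    rcases hmax c (f ⁻¹' B) (hB.preimage f) (by rintro x rfl; exact hc) with hfib | huniv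
    · left
      rw [hfib]
      exact Set.subsingleton_singleton.anti (Set.image_preimage_subset f {c})
    · right
      rw [huniv, Set.image_univ, hf.range_eq]

theorem isPreprimitive_closure_of_isBlock_fiber {X Y I : Type*} {ρ : I → Perm X} {b : X → Y}
    {π : I → Perm Y} (hρ : ∀ i, Function.Semiconj b (ρ i) (π i)) (hb : Function.Surjective b)
    (htrans : IsPretransitive (closure (Set.range ρ)) X)
    (hmax : ∀ (c : Y) (Z : Set X), IsBlock (closure (Set.range ρ)) Z →
      {x | b x = c} ⊆ Z → Z = {x | b x = c} ∨ Z = Set.univ) :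
    IsPreprimitive (closure (Set.range π)) Y := by
  have hlift (g : closure (Set.range ρ)) :
      ∃ p ∈ closure (Set.range π), Function.Semiconj b (g : Perm X) p := by
    obtain ⟨g, hg⟩ := g
    rw [← Set.image_univ] at hg ⊢
    exact exists_mem_closure_semiconj hρ hg
  choose φ hφ hsemi using hlift
  let f : X →ₑ[fun g => (⟨φ g, hφ g⟩ : closure (Set.range π))] Y := ⟨b, hsemi⟩
  exact isPreprimitive_of_isBlock_fiber (f := f) hb htrans hmax

namespace FlipSystem

variable {X Y I : Type*} {ρ : I → Perm X} {b : X → Y} {ι : Perm X} {π : I → Perm Y}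
  {L U : Set I} {s l : I}

theorem flip_mul_mul_pow (h : FlipSystem ρ b ι π L) (s l : I) (k : ℕ) :
    (ι * ρ s * ρ l) ^ k = ι ^ k * (ρ s * ρ l) ^ k := by
  rw [mul_assoc]
  exact (h.flip.commute_of_semiconj (semiconj_mul (h.semiconj s) (h.semiconj l))).mul_pow k

theorem commute_of_commute_flip_mul (h : FlipSystem ρ b ι π L)
    (hc : Commute (ι * ρ s) (ρ l)) : Commute (ρ s) (ρ l) := by
  have hρs : ρ s = ι * (ι * ρ s) := by rw [← mul_assoc, h.flip.mul_self, one_mul]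
  exact hρs ▸ (h.flip.commute_of_semiconj (h.semiconj l)).mul_left hc

theorem commute_of_sq_mem (h : FlipSystem ρ b ι π L) (hsq : ∀ i, ρ i * ρ i = 1) (hs : s ∉ U)
    (hl : l ∉ U) (hmem : (ι * ρ s * ρ l) ^ 2 ∈ closure (ρ '' U)) : Commute (ρ s) (ρ l) := by
  rw [h.flip_mul_mul_pow, pow_two ι, h.flip.mul_self, one_mul] at hmem
  have hinf : (ρ s * ρ l) ^ 2 ∈ closure (ρ '' {s, l}) ⊓ closure (ρ '' U) :=
    ⟨pow_mem (mul_mem (Subgroup.subset_closure (Set.mem_image_of_mem ρ (Or.inl rfl)))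
      (Subgroup.subset_closure (Set.mem_image_of_mem ρ (Or.inr rfl)))) 2, hmem⟩
  have hdisj : {s, l} ∩ U = ∅ := by
    rw [← Set.disjoint_iff_inter_eq_empty, Set.disjoint_insert_left, Set.disjoint_singleton_left]
    exact ⟨hs, hl⟩
  rw [h.inf_closure, hdisj, Set.image_empty, Subgroup.closure_empty, mem_bot, pow_two] at hinf
  exact commute_of_mul_self (hsq s) (hsq l) hinf

theorem flip_mem_of_pow_three_mem (h : FlipSystem ρ b ι π L)
    (hmem : (ι * ρ s * ρ l) ^ 3 ∈ closure (ρ '' U)) :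
    ι ∈ closure (ρ '' insert s (insert l U)) := by
  rw [h.flip_mul_mul_pow, pow_succ ι, pow_two, h.flip.mul_self, one_mul] at hmem
  refine (mul_mem_cancel_right (pow_mem (mul_mem ?_ ?_) 3)).1
    (closure_mono (Set.image_mono fun u hu => Or.inr (Or.inr hu)) hmem)
  · exact Subgroup.subset_closure (Set.mem_image_of_mem ρ (Or.inl rfl))
  · exact Subgroup.subset_closure (Set.mem_image_of_mem ρ (Or.inr (Or.inl rfl)))

theorem commute_of_pow_three_mem (h : FlipSystem ρ b ι π L) (hs : s ∉ L)
    (hι : ι * ρ s ∈ closure (ρ '' L)) (hlU : ∀ u ∈ U, Commute (ρ l) (ρ u))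
    (hmem : (ι * ρ s * ρ l) ^ 3 ∈ closure (ρ '' U)) : Commute (ρ s) (ρ l) := by
  have hinf : ι * ρ s ∈ closure (ρ '' insert s (insert l U)) ⊓ closure (ρ '' L) :=
    ⟨mul_mem (h.flip_mem_of_pow_three_mem hmem)
      (Subgroup.subset_closure (Set.mem_image_of_mem ρ (Or.inl rfl))), hι⟩
  rw [h.inf_closure] at hinf
  refine h.commute_of_commute_flip_mul (Commute.symm ?_)
  refine commute_of_mem_closure (Set.forall_mem_image.2 ?_) _ hinf
  rintro u ⟨rfl | rfl | hu, huL⟩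
  exacts [absurd huL hs, Commute.refl _, hlU u hu]

end FlipSystem

namespace SplitFlipSystem

variable {X Y I : Type*} [Fintype Y] [DecidableEq Y] {ρ : I → Perm X} {b : X → Y} {ι : Perm X}
  {π : I → Perm Y} {L U : Set I} {s t l : I} {A : Finset Y}

theorem mem_closure_of_semiconj (h : SplitFlipSystem ρ b ι π L s t A) (hU : U ⊆ L) {σ : Perm X}
    {p : Perm Y} (hσ : σ ∈ closure (ρ '' L)) (hσp : Function.Semiconj b σ p)
    (hp : p ∈ closure (π '' U)) : σ ∈ closure (ρ '' U) := by
  obtain ⟨σ', hσ', hσ'p⟩ := exists_semiconj_mem_closure h.semiconj hp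
  rwa [h.eq_of_semiconj hσ (closure_mono (Set.image_mono hU) hσ') hσp hσ'p]

theorem sq_mem_or_pow_three_mem [Finite I] (h : SplitFlipSystem ρ b ι π L s t A)
    (hsq : ∀ i, ρ i * ρ i = 1) (hind : ∀ l ∈ L, π l ∉ closure (π '' (L \ {l}))) (hU : U ⊆ L)
    (hUU : ∀ u ∈ U, ∀ v ∈ U, Commute (ρ u) (ρ v)) (hcard : Nat.card Y ≤ 2 * U.ncard + 3)
    {x y : Perm X} (hx : x ∈ closure (ρ '' L)) (hy : y ∈ closure (ρ '' L)) (hxx : x * x = 1)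
    (hyy : y * y = 1) (hxU : ∀ u ∈ U, Commute x (ρ u)) (hyU : ∀ u ∈ U, Commute y (ρ u))
    (hxy : ¬ Commute x y) :
    (x * y) ^ 2 ∈ closure (ρ '' U) ∨ (x * y) ^ 3 ∈ closure (ρ '' U) := by
  obtain ⟨p, -, hp⟩ := exists_mem_closure_semiconj h.semiconj hx
  obtain ⟨q, -, hq⟩ := exists_mem_closure_semiconj h.semiconj hy
  have hpq : ¬ Commute p q := fun hc => hxy <|
    h.eq_of_semiconj (mul_mem hx hy) (mul_mem hy hx) (semiconj_mul hp hq)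
      (hc.eq ▸ semiconj_mul hq hp)
  have hcomm : ∀ {σ : Perm X} {p : Perm Y}, Function.Semiconj b σ p →
      (∀ u ∈ U, Commute σ (ρ u)) → ∀ e ∈ closure (π '' U), Commute p e := fun hσp hσ =>
    commute_of_mem_closure <| Set.forall_mem_image.2 fun u hu =>
      commute_of_semiconj h.surjective hσp (h.semiconj u) (hσ u hu)
  have hD : IsElementaryTwo (closure (π '' U)) := by
    refine isElementaryTwo_closure (Set.forall_mem_image.2 fun u _ => ?_)
      (Set.forall_mem_image.2 fun u hu e he => ?_)
    · exact mul_self_of_semiconj h.surjective (h.semiconj u) (hsq u)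
    · exact hcomm (h.semiconj u) (hUU u hu) e (subset_closure he)
  have hDcard : 2 ^ Nat.card Y ≤ 8 * Nat.card (closure (π '' U)) ^ 2 :=
    calc 2 ^ Nat.card Y ≤ 2 ^ (2 * U.ncard + 3) := Nat.pow_le_pow_right two_pos hcard
      _ = 8 * (2 ^ U.ncard) ^ 2 := by ring
      _ ≤ 8 * Nat.card (closure (π '' U)) ^ 2 := by
        gcongr
        exact two_pow_ncard_le_card_closure_image fun u hu hmem => hind u (hU hu) <|
          closure_mono (Set.image_mono (Set.sdiff_subset_sdiff_left hU)) hmem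
  exact (hD.sq_mem_or_pow_three_mem hDcard (mul_self_of_semiconj h.surjective hp hxx)
    (mul_self_of_semiconj h.surjective hq hyy) (hcomm hp hxU) (hcomm hq hyU) hpq).imp
    (h.mem_closure_of_semiconj hU (pow_mem (mul_mem hx hy) 2) (semiconj_pow (semiconj_mul hp hq) 2))
    (h.mem_closure_of_semiconj hU (pow_mem (mul_mem hx hy) 3) (semiconj_pow (semiconj_mul hp hq) 3))

theorem commute_left [Finite I] (h : SplitFlipSystem ρ b ι π L s t A)
    (hsq : ∀ i, ρ i * ρ i = 1) (hind : ∀ l ∈ L, π l ∉ closure (π '' (L \ {l}))) (hU : U ⊆ L)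
    (hUU : ∀ u ∈ U, ∀ v ∈ U, Commute (ρ u) (ρ v)) (hcard : Nat.card Y ≤ 2 * U.ncard + 3)
    (hsU : ∀ u ∈ U, Commute (ρ s) (ρ u)) (hl : l ∈ L \ U) (hlU : ∀ u ∈ U, Commute (ρ l) (ρ u)) :
    Commute (ρ s) (ρ l) := by
  have hιρ : ∀ i, Commute ι (ρ i) := fun i => h.flip.commute_of_semiconj (h.semiconj i)
  by_contra hsl
  have hgg : ι * ρ s * (ι * ρ s) = 1 := by
    rw [(hιρ s).symm.mul_mul_mul_comm, h.flip.mul_self, hsq, one_mul]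
  rcases h.sq_mem_or_pow_three_mem hsq hind hU hUU hcard h.flip_mul_mem
    (Subgroup.subset_closure (Set.mem_image_of_mem ρ hl.1)) hgg (hsq l)
    (fun u hu => (hιρ u).mul_left (hsU u hu)) hlU
    (mt h.commute_of_commute_flip_mul hsl) with hmem | hmem
  · exact hsl (h.commute_of_sq_mem hsq (fun hs => h.left_notMem (hU hs)) hl.2 hmem)
  · exact hsl (h.commute_of_pow_three_mem h.left_notMem h.flip_mul_mem hlU hmem)

end SplitFlipSystem

theorem forall_lt_or_forall_gt_of_closure_eq_top {Y : Type*} [Finite Y] {r : ℕ}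
    {π : Fin r → Perm Y} {L : Set (Fin r)} (hY : 2 < Nat.card Y)
    (hcomm : ∀ i j : Fin r, (i : ℕ) + 1 < j → Commute (π i) (π j)) (hne : ∀ l ∈ L, π l ≠ 1)
    (htop : closure (π '' L) = ⊤) {s : Fin r} (hs : s ∉ L) :
    (∀ l ∈ L, s < l) ∨ ∀ l ∈ L, l < s := by
  have hside : ∀ l ∈ L, l < s ∨ s < l := fun l hl =>
    lt_or_gt_of_ne (ne_of_mem_of_not_mem hl hs)
  have hunion : L = {l ∈ L | l < s} ∪ {l ∈ L | s < l} :=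
    Set.Subset.antisymm (fun l hl => (hside l hl).imp (And.intro hl) (And.intro hl))
      (Set.union_subset (Set.sep_subset _ _) (Set.sep_subset _ _))
  have hbot : ∀ {J : Set (Fin r)}, closure (π '' J) = ⊥ → ∀ l ∈ L, l ∉ J := fun hJ l hl hlJ =>
    hne l hl (closure_eq_bot_iff.1 hJ (Set.mem_image_of_mem π hlJ))
  have hle : closure (π '' {l ∈ L | s < l}) ≤ centralizer (closure (π '' {l ∈ L | l < s})) := by
    rw [centralizer_closure, closure_le]
    rintro _ ⟨j, hj, rfl⟩
    refine mem_centralizer_iff.2 (Set.forall_mem_image.2 fun i hi => hcomm i j ?_)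
    have his : i < s := hi.2
    have hsj : s < j := hj.2
    rw [Fin.lt_def] at his hsj
    omega
  rw [hunion, Set.image_union, Subgroup.closure_union] at htop
  rcases eq_bot_or_eq_bot_of_le_centralizer hY hle htop with hlt | hgt
  · exact Or.inl fun l hl => (hside l hl).resolve_left fun hls => hbot hlt l hl ⟨hl, hls⟩
  · exact Or.inr fun l hl => (hside l hl).resolve_right fun hsl => hbot hgt l hl ⟨hl, hsl⟩

theorem ncard_sep_near_le {r : ℕ} {L : Set (Fin r)} {s : Fin r}
    (hs : (∀ l ∈ L, s < l) ∨ ∀ l ∈ L, l < s) :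
    {l ∈ L | (l : ℕ) < s + 3 ∧ (s : ℕ) < l + 3}.ncard ≤ 2 := by
  rw [← Set.ncard_pair (show (1 : ℕ) ≠ 2 by norm_num)]
  refine Set.ncard_le_ncard_of_injOn (fun l => (l - s) + (s - l) : Fin r → ℕ) ?_ ?_
  · rintro l ⟨hl, hnear⟩
    change (l : ℕ) - s + (s - l) = 1 ∨ (l : ℕ) - s + (s - l) = 2
    have hne : (l : ℕ) ≠ s := fun heq => hs.elim
      (fun hs => (hs l hl).ne (Fin.ext heq.symm)) fun hs => (hs l hl).ne (Fin.ext heq)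
    omega
  · rintro l ⟨hl, -⟩ l' ⟨hl', -⟩ heq
    dsimp only at heq
    rw [Fin.ext_iff]
    rcases hs with hs | hs
    all_goals
      have := Fin.lt_def.1 (hs l hl)
      have := Fin.lt_def.1 (hs l' hl')
      omega

theorem exists_sparse_subset {r m : ℕ} {L : Set (Fin r)} {s : Fin r} (hm : Odd m)
    (hs : (∀ l ∈ L, s < l) ∨ ∀ l ∈ L, l < s) (hL : m ≤ L.ncard + 2) :
    ∃ U ⊆ L, (∀ u ∈ U, (s : ℕ) + 3 ≤ u ∨ (u : ℕ) + 3 ≤ s) ∧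
      (∀ u ∈ U, ∀ v ∈ U, (u : ℕ) + 1 ≠ v) ∧ m ≤ 2 * U.ncard + 3 := by
  let U : ℕ → Set (Fin r) := fun e =>
    {l ∈ L | ((s : ℕ) + 3 ≤ l ∨ (l : ℕ) + 3 ≤ s) ∧ (l : ℕ) % 2 = e}
  have hcover : L ⊆ {l ∈ L | (l : ℕ) < s + 3 ∧ (s : ℕ) < l + 3} ∪ (U 0 ∪ U 1) := by
    intro l hl
    simp only [U, Set.mem_union, Set.mem_ofPred_eq, hl, true_and]
    omega
  have hcard : L.ncard ≤ 2 + ((U 0).ncard + (U 1).ncard) :=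
    (Set.ncard_le_ncard hcover).trans <| (Set.ncard_union_le _ _).trans <|
      add_le_add (ncard_sep_near_le hs) (Set.ncard_union_le _ _)
  obtain ⟨e, he⟩ : ∃ e, m ≤ 2 * (U e).ncard + 3 := by
    by_contra! hlt
    have := hlt 0
    have := hlt 1
    rw [Nat.odd_iff] at hm
    omega
  refine ⟨U e, Set.sep_subset _ _, fun u hu => hu.2.1, fun u hu v hv => ?_, he⟩
  have := hu.2.2
  have := hv.2.2
  omega

theorem SplitFlipSystem.forall_commute_left {X Y : Type*} [Fintype Y] [DecidableEq Y] {r : ℕ}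
    {ρ : Fin r → Perm X} {b : X → Y} {ι : Perm X} {π : Fin r → Perm Y} {L : Set (Fin r)}
    {s t : Fin r} {A : Finset Y} (h : SplitFlipSystem ρ b ι π L s t A) (hY : 2 < Nat.card Y)
    (hsq : ∀ i, ρ i * ρ i = 1) (hcomm : ∀ i j : Fin r, (i : ℕ) + 1 < j → Commute (ρ i) (ρ j))
    (hind : ∀ l ∈ L, π l ∉ closure (π '' (L \ {l}))) (hL : Nat.card Y ≤ L.ncard + 2) :
    ∀ l ∈ L, Commute (ρ s) (ρ l) := by
  have hside := forall_lt_or_forall_gt_of_closure_eq_top hY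
    (fun i j hij => commute_of_semiconj h.surjective (h.semiconj i) (h.semiconj j) (hcomm i j hij))
    (fun l hl hone => hind l hl (hone ▸ one_mem _)) h.closure_eq_top h.left_notMem
  obtain ⟨U, hUL, hfar, hsparse, hU⟩ := exists_sparse_subset h.odd_card hside hL
  intro l hl
  by_cases hls : (s : ℕ) + 1 ≠ l ∧ (l : ℕ) + 1 ≠ s
  · exact commute_of_ne_succ hcomm hls.1 hls.2
  refine h.commute_left hsq hind hUL
    (fun u hu v hv => commute_of_ne_succ hcomm (hsparse u hu v hv) (hsparse v hv u hu)) hU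
    (fun u hu => ?_) ⟨hl, fun hlU => ?_⟩ (fun u hu => ?_)
  · have := hfar u hu
    exact commute_of_ne_succ hcomm (by omega) (by omega)
  · have := hfar l hlU
    omega
  · have := hfar u hu
    exact commute_of_ne_succ hcomm (by omega) (by omega)

namespace IsSggi

variable {n r : ℕ} {ρ : Fin r → Perm (Fin n)}

theorem mul_self (h : IsSggi ρ) (i : Fin r) : ρ i * ρ i = 1 := by
  rw [← pow_two, ← h.1 i, pow_orderOf_eq_one]

theorem ne_one (h : IsSggi ρ) (i : Fin r) : ρ i ≠ 1 := by
  rw [ne_eq, ← orderOf_eq_one_iff, h.1 i]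
  exact Nat.succ_ne_self 1

theorem commute (h : IsSggi ρ) (i j : Fin r) (hij : (i : ℕ) + 1 < j) : Commute (ρ i) (ρ j) := by
  refine commute_of_mul_self (h.mul_self i) (h.mul_self j) ?_
  rw [← pow_two]
  exact h.2 i j (lt_abs.2 (Or.inr (by omega)))

end IsSggi

theorem setOf_and_not_union_setOf_and {α : Type*} (p q : α → Prop) :
    {x | p x ∧ ¬ q x} ∪ {x | p x ∧ q x} = {x | p x} := by
  ext x
  simp only [Set.mem_union, Set.mem_ofPred_eq]
  tauto

theorem closure_image_eq_top_of_maximal_fibers {X Y : Type*} [Finite Y] {r : ℕ}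
    {ρ : Fin r → Perm X} {b : X → Y} {π : Fin r → Perm Y} {L : Set (Fin r)}
    (hY : 6 < Nat.card Y) (hL : Nat.card Y ≤ L.ncard + 2) (hsq : ∀ i, ρ i * ρ i = 1)
    (hcomm : ∀ i j : Fin r, (i : ℕ) + 1 < j → Commute (ρ i) (ρ j))
    (hρ : ∀ i, Function.Semiconj b (ρ i) (π i)) (hb : Function.Surjective b)
    (htrans : IsPretransitive (closure (Set.range ρ)) X)
    (hmax : ∀ (c : Y) (Z : Set X), IsBlock (closure (Set.range ρ)) Z →
      {x | b x = c} ⊆ Z → Z = {x | b x = c} ∨ Z = Set.univ)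
    (hgen : closure (π '' L) = closure (Set.range π))
    (hind : ∀ l ∈ L, π l ∉ closure (π '' (L \ {l}))) : closure (π '' L) = ⊤ := by
  obtain ⟨τ, hτ, hrange⟩ := exists_isIndepString
    (fun i => mul_self_of_semiconj hb (hρ i) (hsq i))
    (fun i j hij => commute_of_semiconj hb (hρ i) (hρ j) (hcomm i j hij)) hind
  have hprim := isPreprimitive_closure_of_isBlock_fiber hρ hb htrans hmax
  rw [← hgen, ← hrange] at hprim
  rw [← hrange]
  exact hτ.closure_range_eq_top hY hL hprim

theorem stmt14 {n r m : ℕ} (hm7 : 7 ≤ m) (hn : n = 2 * m) (hr : n / 2 ≤ r)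
    (ρ : Fin r → Equiv.Perm (Fin n)) (hstring : IsStringC ρ)
    (htrans : MulAction.IsPretransitive ↥(Subgroup.closure (Set.range ρ)) (Fin n))
    (b : Fin n → Fin m) (hbsurj : Function.Surjective b)
    (hfib : ∀ c : Fin m, Set.ncard {x | b x = c} = 2)
    (hcompat : ∀ g ∈ Subgroup.closure (Set.range ρ), ∀ x y : Fin n,
      b x = b y → b (g x) = b (g y))
    -- every fiber of b is a maximal block
    (hmax : ∀ (c : Fin m) (X : Set (Fin n)),
      MulAction.IsBlock ↥(Subgroup.closure (Set.range ρ)) X →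
      {x | b x = c} ⊆ X → X = {x | b x = c} ∨ X = Set.univ)
    -- π l is the induced block permutation φ (ρ l)
    (π : Fin r → Equiv.Perm (Fin m))
    (hπ : ∀ (l : Fin r) (x : Fin n), b (ρ l x) = π l (b x))
    -- L generates the image of φ independently
    (L : Set (Fin r))
    (hLgen : Subgroup.closure (π '' L) = Subgroup.closure (Set.range π))
    (hLind : ∀ l ∈ L, π l ∉ Subgroup.closure (π '' (L \ {l})))
    -- |R ∪ C| = 2
    (hRC : ({i : Fin r | i ∉ L ∧ ¬ ∀ l ∈ L, Commute (ρ i) (ρ l)} ∪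
            {i : Fin r | i ∉ L ∧ ∀ l ∈ L, Commute (ρ i) (ρ l)}).ncard = 2) :
    Nonempty (↥(Subgroup.closure (ρ '' L)) ≃* Equiv.Perm (Fin m)) ∧
    {i : Fin r | i ∉ L ∧ ¬ ∀ l ∈ L, Commute (ρ i) (ρ l)}.ncard = 1 ∧
    {i : Fin r | i ∉ L ∧ ∀ l ∈ L, Commute (ρ i) (ρ l)}.ncard = 1 ∧
    Odd m ∧
    (↑(Subgroup.closure (Set.range ρ)) : Set (Equiv.Perm (Fin n))) =
      {σ : Equiv.Perm (Fin n) | ∀ x y : Fin n, b x = b y → b (σ x) = b (σ y)} := by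
  obtain ⟨hsggi, hinter⟩ := hstring
  have hcompl : Lᶜ.ncard = 2 := by rwa [setOf_and_not_union_setOf_and] at hRC
  have hY : 6 < Nat.card (Fin m) := by rwa [Nat.card_fin]
  have hL : Nat.card (Fin m) ≤ L.ncard + 2 := by
    have hsum := Set.ncard_add_ncard_compl L
    rw [hcompl, Nat.card_fin] at hsum
    rw [Nat.card_fin]
    omega
  have htop := closure_image_eq_top_of_maximal_fibers hY hL hsggi.mul_self hsggi.commute hπ hbsurj
    htrans hmax hLgen hLind
  obtain ⟨ι, hι⟩ := exists_isFlip hfib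
  obtain ⟨s, t, A, h⟩ := FlipSystem.exists_splitFlipSystem (ρ := ρ)
    ⟨hι, hbsurj, hπ, hsggi.ne_one, hinter, htop⟩ hcompl
  have hcomm := h.forall_commute_left (by omega) hsggi.mul_self hsggi.commute hLind hL
  refine ⟨h.nonempty_mulEquiv, ?_, ?_, Nat.card_fin m ▸ h.odd_card, h.coe_closure_range⟩
  · rw [h.setOf_not_commute_eq (by omega) hcomm, Set.ncard_singleton]
  · rw [h.setOf_commute_eq (by omega) hcomm, Set.ncard_singleton]
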